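/- arXiv:2508.04209 — 8 statements merged into one kernel-verified Lean document; each statement's English description precedes it below -/
import Mathlib

section
/- Let k ≥ 1, let Δ ≥ 0, and let G = (V,E) be a finite simple graph with |V| ≥ k whose maximum vertex degree is at most Δ. Then ∑_{i=1}^{k} λ_i(L(G)) ≤ |E| + k · min{Δ, k}. -/
open Finset

/-- The `i`-th largest entry (1-indexed, so `i = 1` gives the maximum) of a tuple
`f : Fin n → ℝ`, counted with multiplicity. Junk value `0` outside the range `1 ≤ i ≤ n`. -/
noncomputable def ithLargest {n : ℕ} (f : Fin n → ℝ) (i : ℕ) : ℝ :=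
  if h : 1 ≤ i ∧ i ≤ n then f (Tuple.sort f (Fin.rev ⟨i - 1, by omega⟩)) else 0

/-- The eigenvalues of the Laplacian matrix of a finite simple graph `G`
(as a tuple indexed by the vertices, with multiplicity). -/
noncomputable def lapEigs {n : ℕ} (G : SimpleGraph (Fin n)) [DecidableRel G.Adj] :
    Fin n → ℝ :=
  (SimpleGraph.posSemidef_lapMatrix ℝ G).isHermitian.eigenvalues

/-- The degree sequence of `G`, as a real-valued tuple indexed by the vertices. -/
noncomputable def degTuple {n : ℕ} (G : SimpleGraph (Fin n)) [DecidableRel G.Adj] :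
    Fin n → ℝ :=
  fun v => (G.degree v : ℝ)

noncomputable def psi (a : ℝ) : ℝ := (1-a) * max (2*a-1) 0

lemma psi_nonneg {a : ℝ} (h : a ≤ 1) : 0 ≤ psi a :=
  mul_nonneg (by linarith) (le_max_right _ _)

lemma K_aux {a b : ℝ} (hb0 : 0 ≤ b) (ha : a < 1) (hb : b < 1) (hab : b ≤ a) :
    (1-a)*(1-b)*(a+b-1)/((1-a)+(1-b)) ≤ psi a * b := by
  have hs : 0 < (1-a)+(1-b) := by linarith
  rcases le_total (a+b) 1 with h | h
  · have h1 : (1-a)*(1-b)*(a+b-1) ≤ 0 :=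
      mul_nonpos_of_nonneg_of_nonpos (mul_nonneg (by linarith) (by linarith)) (by linarith)
    exact (div_nonpos_of_nonpos_of_nonneg h1 hs.le).trans (mul_nonneg (psi_nonneg ha.le) hb0)
  · have h2 : 2*a-1 ≤ max (2*a-1) 0 := le_max_left _ _
    have h3 : (1-a)*(2*a-1)*b ≤ psi a * b := by
      unfold psi
      gcongr
    refine le_trans ?_ h3
    rw [div_le_iff₀ hs]
    have e1 : (1-b) ≤ a * ((1-a)+(1-b)) := by nlinarith
    have e2 : a*(a+b-1) ≤ (2*a-1)*b := by nlinarith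
    have e3 : (1-b)*(a+b-1) ≤ a * ((1-a)+(1-b)) * (a+b-1) :=
      mul_le_mul_of_nonneg_right e1 (by linarith)
    have e4 : a*(a+b-1) * ((1-a)+(1-b)) ≤ (2*a-1)*b* ((1-a)+(1-b)) :=
      mul_le_mul_of_nonneg_right e2 hs.le
    have e5 : (1-b)*(a+b-1) ≤ (2*a-1)*b* ((1-a)+(1-b)) := by linarith
    have := mul_le_mul_of_nonneg_left e5 (by linarith : 0 ≤ 1-a)
    linarith

lemma pair_ineq {a b t : ℝ} (ha0 : 0 ≤ a) (hb0 : 0 ≤ b) (ha : a ≤ 1) (hb : b ≤ 1)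
    (hta : t^2 ≤ a*(1-a)) (htb : t^2 ≤ b*(1-b)) :
    a+b-1-2*t ≤ a*b + psi a * b + psi b * a + t^2/(1-a) + t^2/(1-b) := by
  have p1 : 0 ≤ psi a * b := mul_nonneg (psi_nonneg ha) hb0
  have p2 : 0 ≤ psi b * a := mul_nonneg (psi_nonneg hb) ha0
  have p3 : 0 ≤ t^2/(1-a) := div_nonneg (sq_nonneg _) (by linarith)
  have p4 : 0 ≤ t^2/(1-b) := div_nonneg (sq_nonneg _) (by linarith)
  rcases ha.eq_or_lt with rfl | ha1
  · have : t = 0 := by nlinarith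
    subst this; linarith
  rcases hb.eq_or_lt with rfl | hb1
  · have : t = 0 := by nlinarith
    subst this; linarith
  have hx : 0 < 1-a := by linarith
  have hy : 0 < 1-b := by linarith
  have hs : 0 < (1-a)+(1-b) := by linarith
  have q1 : -2*t ≤ (1-a)*(1-b)/((1-a)+(1-b)) + t^2/(1-a) + t^2/(1-b) := by
    have : (1-a)*(1-b)/((1-a)+(1-b)) + t^2/(1-a) + t^2/(1-b) + 2*t
      = (t*((1-a)+(1-b)) + (1-a)*(1-b))^2 / (((1-a)+(1-b))*(1-a)*(1-b)) := by
      field_simp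
      ring
    have h0 : 0 ≤ (t*((1-a)+(1-b)) + (1-a)*(1-b))^2 / (((1-a)+(1-b))*(1-a)*(1-b)) := by
      positivity
    linarith
  have q2 : a+b-1 + (1-a)*(1-b)/((1-a)+(1-b)) = a*b + (1-a)*(1-b)*(a+b-1)/((1-a)+(1-b)) := by
    field_simp
    ring
  rcases le_total b a with h | h
  · have := K_aux hb0 ha1 hb1 h
    linarith
  · have := K_aux ha0 hb1 ha1 h
    have e : (1-b)*(1-a)*(b+a-1)/((1-b)+(1-a)) = (1-a)*(1-b)*(a+b-1)/((1-a)+(1-b)) := by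
      ring_nf
    linarith

lemma vertex_ineq {a k : ℝ} (ha0 : 0 ≤ a) (ha : a ≤ 1) (hk : 2 ≤ k) :
    2 * (psi a * (k-a)) - a^2 ≤ (k-2)*a := by
  unfold psi
  rcases le_total (2*a-1) 0 with h | h
  · rw [max_eq_right h]; nlinarith
  · rw [max_eq_left h]
    have h1 : 2*((1-a)*(2*a-1)) ≤ a := by nlinarith [sq_nonneg (4*a-3)]
    have h2 : 2*((1-a)*(2*a-1)) ≤ 1/4 := by nlinarith [sq_nonneg (4*a-3)]
    have h3 : 2*((1-a)*(2*a-1))*(2-a) ≤ a^2 := by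
      rcases le_total a (3/5) with g | g
      · have : 2*((1-a)*(2*a-1)) ≤ 4/25 := by nlinarith
        nlinarith
      · nlinarith
    nlinarith [mul_le_mul_of_nonneg_right h1 (by linarith : 0 ≤ k-2)]

section
variable {n : ℕ} (P : Fin n → Fin n → ℝ) (k : ℕ)

lemma P_facts (idem : ∀ u, ∑ v, P u v ^ 2 = P u u) (u : Fin n) :
    0 ≤ P u u ∧ P u u ≤ 1 ∧ ∑ v ∈ univ.erase u, P u v ^ 2 = P u u * (1 - P u u) ∧
      ∀ v, u ≠ v → P u v ^ 2 ≤ P u u * (1 - P u u) := by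
  have h0 : 0 ≤ P u u := by rw [← idem u]; positivity
  have h1 : P u u ^ 2 ≤ P u u := by
    conv_rhs => rw [← idem u]
    exact single_le_sum (f := fun v => P u v ^2) (fun i _ => sq_nonneg _) (mem_univ u)
  have h2 : ∑ v ∈ univ.erase u, P u v ^ 2 = P u u * (1 - P u u) := by
    have := Finset.sum_erase_add univ (fun v => P u v ^ 2) (mem_univ u)
    rw [idem u] at this
    linarith
  refine ⟨h0, by nlinarith, h2, fun v hv => ?_⟩
  rw [← h2]
  exact single_le_sum (f := fun v => P u v ^2) (fun i _ => sq_nonneg _) (by simp [hv.symm])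

lemma sum_erase_swap (f : Fin n → Fin n → ℝ) :
    ∑ u, ∑ v ∈ univ.erase u, f u v = ∑ u, ∑ v ∈ univ.erase u, f v u := by
  have h : ∀ g : Fin n → Fin n → ℝ, ∑ u, ∑ v ∈ univ.erase u, g u v
      = ∑ u, ∑ v, if u ≠ v then g u v else 0 := by
    intro g
    refine sum_congr rfl fun u _ => ?_
    rw [← sum_filter]
    refine sum_congr ?_ fun _ _ => rfl
    ext v; simp [eq_comm]
  rw [h, h, sum_comm]
  simp only [ne_comm]

lemma core_sq (idem : ∀ u, ∑ v, P u v ^ 2 = P u u) (symm : ∀ u v, P u v = P v u)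
    (tr : ∑ u, P u u = k) (hk : 2 ≤ k) (c : Fin n → Fin n → ℝ)
    (hc : ∀ u v, c u v = 0 ∨ (c u v = 1 ∧ u ≠ v)) :
    ∑ u, ∑ v, c u v * (P u u + P v v - 2 * P u v - 1) ≤ 2 * (k:ℝ)^2 := by
  have F := P_facts P idem
  set R : Fin n → Fin n → ℝ := fun u v => P u u * P v v + psi (P u u) * P v v
    + psi (P v v) * P u u + P u v ^ 2 / (1 - P u u) + P u v ^ 2 / (1 - P v v) with hR
  have hR0 : ∀ u v, 0 ≤ R u v := by
    intro u v
    obtain ⟨a0, a1, -, -⟩ := F u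
    obtain ⟨b0, b1, -, -⟩ := F v
    have := psi_nonneg a1
    have := psi_nonneg b1
    have : 0 ≤ 1 - P u u := by linarith
    have : 0 ≤ 1 - P v v := by linarith
    simp only [hR]; positivity
  have step1 : ∑ u, ∑ v, c u v * (P u u + P v v - 2 * P u v - 1) ≤
      ∑ u, ∑ v ∈ univ.erase u, R u v := by
    refine sum_le_sum fun u _ => ?_
    have hcu : c u u = 0 := by rcases hc u u with h | ⟨_, h⟩; exacts [h, absurd rfl h]
    rw [← Finset.sum_erase_add univ _ (mem_univ u), hcu, zero_mul, add_zero]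
    refine sum_le_sum fun v hv => ?_
    have huv : u ≠ v := fun h => by simp [h] at hv
    rcases hc u v with h | ⟨h, -⟩
    · rw [h, zero_mul]; exact hR0 u v
    · rw [h, one_mul]
      obtain ⟨a0, a1, -, a3⟩ := F u
      obtain ⟨b0, b1, -, b3⟩ := F v
      have := pair_ineq a0 b0 a1 b1 (a3 v huv) (by rw [symm u v]; exact b3 u huv.symm)
      simp only [hR]; linarith
  have er : ∀ u, ∑ v ∈ univ.erase u, P v v = k - P u u := by
    intro u
    have := Finset.sum_erase_add univ (fun v => P v v) (mem_univ u)
    rw [tr] at this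
    linarith
  have t1 : ∑ u, ∑ v ∈ univ.erase u, P u u * P v v = ∑ u, P u u * (k - P u u) := by
    simp_rw [← mul_sum, er]
  have t2 : ∑ u, ∑ v ∈ univ.erase u, psi (P u u) * P v v = ∑ u, psi (P u u) * (k - P u u) := by
    simp_rw [← mul_sum, er]
  have t3 : ∑ u, ∑ v ∈ univ.erase u, psi (P v v) * P u u = ∑ u, psi (P u u) * (k - P u u) := by
    rw [← t2, sum_erase_swap]
  have t4 : ∑ u, ∑ v ∈ univ.erase u, P u v ^ 2 / (1 - P u u) ≤ (k:ℝ) := by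
    rw [← tr]
    refine sum_le_sum fun u _ => ?_
    obtain ⟨a0, a1, a2, -⟩ := F u
    rw [← sum_div, a2]
    rcases a1.eq_or_lt with h | h
    · rw [h]; norm_num
    · rw [mul_div_assoc, div_self (by linarith), mul_one]
  have t5 : ∑ u, ∑ v ∈ univ.erase u, P u v ^ 2 / (1 - P v v) ≤ (k:ℝ) := by
    refine le_trans (le_of_eq ?_) t4
    rw [sum_erase_swap]
    refine sum_congr rfl fun u _ => sum_congr rfl fun v _ => ?_
    rw [symm]
  have step2 : ∑ u, ∑ v ∈ univ.erase u, R u v ≤ ∑ u, (P u u * (k - P u u)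
      + 2 * (psi (P u u) * (k - P u u))) + 2 * k := by
    have m : ∑ u, 2 * (psi (P u u) * (k - P u u)) = 2 * ∑ u, psi (P u u) * (k - P u u) := by
      rw [mul_sum]
    simp only [hR, sum_add_distrib]
    linarith
  have step3 : ∑ u, (P u u * (k - P u u) + 2 * (psi (P u u) * (k - P u u)))
      ≤ ∑ u, (2 * k - 2) * P u u := by
    refine sum_le_sum fun u _ => ?_
    obtain ⟨a0, a1, -, -⟩ := F u
    have := vertex_ineq a0 a1 (by exact_mod_cast hk : (2:ℝ) ≤ k)
    nlinarith
  rw [← mul_sum, tr] at step3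
  nlinarith

lemma core_deg (idem : ∀ u, ∑ v, P u v ^ 2 = P u u)
    (tr : ∑ u, P u u = k) (D : ℝ) (c : Fin n → Fin n → ℝ)
    (csymm : ∀ u v, c u v = c v u)
    (hc : ∀ u v, c u v = 0 ∨ (c u v = 1 ∧ u ≠ v)) (hD : ∀ u, ∑ v, c u v ≤ D) :
    ∑ u, ∑ v, c u v * (P u u + P v v - 2 * P u v - 1) ≤ 2 * (k * D) := by
  have F := P_facts P idem
  have s1 : ∑ u, ∑ v, c u v * (P u u + P v v - 2 * P u v - 1) ≤
      ∑ u, ∑ v, (c u v * P u u + c u v * P v v) := by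
    refine sum_le_sum fun u _ => sum_le_sum fun v _ => ?_
    rcases hc u v with h | ⟨h, h'⟩
    · simp [h]
    · obtain ⟨a0, a1, -, a3⟩ := F u
      have := a3 v h'
      rw [h]
      nlinarith [sq_nonneg (2 * P u u - 1), sq_nonneg (2 * P u v - 1)]
  have s2 : ∑ u, ∑ v, c u v * P u u ≤ k * D := by
    rw [← tr, sum_mul]
    refine sum_le_sum fun u _ => ?_
    rw [← sum_mul, mul_comm]
    exact mul_le_mul_of_nonneg_left (hD u) (F u).1
  have s3 : ∑ u, ∑ v, c u v * P v v ≤ k * D := by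
    rw [sum_comm]
    simp_rw [fun u v => csymm v u]
    convert s2 using 4
  simp only [sum_add_distrib] at s1
  linarith
end

lemma exists_top {n : ℕ} (f : Fin n → ℝ) (k : ℕ) (hk1 : 1 ≤ k) (hk2 : k ≤ n) :
    ∃ J : Finset (Fin n), J.card = k ∧ ∑ i ∈ Finset.Icc 1 k, ithLargest f i = ∑ j ∈ J, f j := by
  set σ : ℕ → Fin n := fun i => if h : 1 ≤ i ∧ i ≤ n then
    Tuple.sort f (Fin.rev ⟨i - 1, by omega⟩) else ⟨0, by omega⟩ with hσ
  have inj : Set.InjOn σ (Finset.Icc 1 k : Finset ℕ) := by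
    intro i hi j hj hij
    simp only [coe_Icc, Set.mem_Icc] at hi hj
    have h1 : 1 ≤ i ∧ i ≤ n := by omega
    have h2 : 1 ≤ j ∧ j ≤ n := by omega
    simp only [hσ, dif_pos h1, dif_pos h2] at hij
    have := Fin.rev_injective ((Tuple.sort f).injective hij)
    simp only [Fin.mk.injEq] at this
    omega
  refine ⟨(Finset.Icc 1 k).image σ, ?_, ?_⟩
  · rw [card_image_of_injOn inj]; simp
  · rw [sum_image inj]
    refine sum_congr rfl fun i hi => ?_
    simp only [mem_Icc] at hi
    have h1 : 1 ≤ i ∧ i ≤ n := by omega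
    simp only [ithLargest, hσ, dif_pos h1]

lemma deg_add_deg {n : ℕ} (G : SimpleGraph (Fin n)) [DecidableRel G.Adj] {u v : Fin n}
    (h : G.Adj u v) : G.degree u + G.degree v ≤ G.edgeFinset.card + 1 := by
  classical
  rw [← G.card_incidenceFinset_eq_degree, ← G.card_incidenceFinset_eq_degree,
    ← card_union_add_card_inter]
  have h1 : (G.incidenceFinset u ∪ G.incidenceFinset v).card ≤ G.edgeFinset.card := by
    apply card_le_card
    apply union_subset <;> exact G.incidenceFinset_subset _
  have h2 : (G.incidenceFinset u ∩ G.incidenceFinset v) = {s(u,v)} := by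
    rw [← coe_inj]
    simpa using G.incidenceSet_inter_incidenceSet_of_adj h
  rw [h2, card_singleton]
  omega

lemma eig_le {n : ℕ} (G : SimpleGraph (Fin n)) [DecidableRel G.Adj] (x : Fin n → ℝ) (hx : x ≠ 0)
    (l : ℝ) (h : ∀ u, G.degree u * x u - ∑ w ∈ G.neighborFinset u, x w = l * x u) :
    l ≤ G.edgeFinset.card + 1 := by
  have h' : ∀ u, l * x u = ∑ w ∈ G.neighborFinset u, (x u - x w) := by
    intro u
    rw [← h u, sum_sub_distrib, sum_const, G.card_neighborFinset_eq_degree, nsmul_eq_mul]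
  obtain ⟨u₀, hu₀⟩ : ∃ u, x u ≠ 0 := by
    by_contra! hc
    exact hx (funext hc)
  by_cases hG : ∃ u v, G.Adj u v ∧ x u ≠ x v
  · obtain ⟨a, b, hab, hne⟩ := hG
    obtain ⟨⟨u, v⟩, hm, hmax⟩ := Finset.exists_max_image
      (univ.filter fun e : Fin n × Fin n => G.Adj e.1 e.2) (fun e => x e.1 - x e.2)
      ⟨(a, b), by simpa using hab⟩
    simp only [mem_filter, mem_univ, true_and, Prod.forall] at hm hmax
    set m := x u - x v with hm'
    have hpos : 0 < m := by
      rcases lt_or_gt_of_ne hne with g | g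
      · have := hmax b a hab.symm; linarith
      · have := hmax a b hab; linarith
    have e1 : l * x u ≤ G.degree u * m := by
      rw [h' u, ← G.card_neighborFinset_eq_degree, ← nsmul_eq_mul]
      exact sum_le_card_nsmul _ _ _ fun w hw => hmax u w (by simpa using hw)
    have e2 : -(l * x v) ≤ G.degree v * m := by
      rw [h' v, ← sum_neg_distrib, ← G.card_neighborFinset_eq_degree, ← nsmul_eq_mul]
      refine sum_le_card_nsmul _ _ _ fun w hw => ?_
      have := hmax w v (by simpa [G.adj_comm] using hw)
      linarith
    have e3 : ((G.degree u : ℝ) + G.degree v) ≤ G.edgeFinset.card + 1 := by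
      exact_mod_cast deg_add_deg G hm
    have e4 : l * m ≤ (G.edgeFinset.card + 1) * m := by
      have := mul_le_mul_of_nonneg_right e3 hpos.le
      rw [hm'] at *
      linarith
    exact le_of_mul_le_mul_right e4 hpos
  · push Not at hG
    have : l * x u₀ = 0 := by
      rw [h' u₀]
      refine sum_eq_zero fun w hw => ?_
      rw [hG u₀ w (by simpa using hw), sub_self]
    have : l = 0 := by simpa [hu₀] using this
    rw [this]; positivity

lemma exists_P {n : ℕ} (G : SimpleGraph (Fin n)) [DecidableRel G.Adj] (J : Finset (Fin n)) :
    ∃ P : Fin n → Fin n → ℝ, (∀ u, ∑ v, P u v ^ 2 = P u u) ∧ (∀ u v, P u v = P v u) ∧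
      (∑ u, P u u = J.card) ∧ ∑ j ∈ J, lapEigs G j =
        (∑ u, ∑ v, (if G.Adj u v then (1:ℝ) else 0) * (P u u + P v v - 2 * P u v)) / 2 := by
  set hA := (SimpleGraph.posSemidef_lapMatrix ℝ G).isHermitian with hhA
  set V : Fin n → Fin n → ℝ := fun j u => hA.eigenvectorBasis j u with hV
  have orth : ∀ i j, ∑ u, V i u * V j u = if i = j then 1 else 0 := by
    intro i j
    have := orthonormal_iff_ite.1 hA.eigenvectorBasis.orthonormal i j
    rw [← this]
    simp [PiLp.inner_apply, hV, mul_comm]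
  have eig : ∀ j, lapEigs G j =
      (∑ u, ∑ v, if G.Adj u v then (V j u - V j v) ^ 2 else 0) / 2 := by
    intro j
    rw [← SimpleGraph.lapMatrix_toLinearMap₂', Matrix.toLinearMap₂'_apply']
    have : (G.lapMatrix ℝ).mulVec (V j) = lapEigs G j • V j := hA.mulVec_eigenvectorBasis j
    rw [this, dotProduct_smul]
    have o := orth j j
    simp only [if_true] at o
    simp only [dotProduct, o, smul_eq_mul, mul_one]
  refine ⟨fun u v => ∑ j ∈ J, V j u * V j v, ?_, ?_, ?_, ?_⟩
  · intro u
    simp_rw [sq, sum_mul_sum]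
    rw [sum_comm]
    refine sum_congr rfl fun i hi => ?_
    rw [sum_comm]
    have : ∀ j, ∑ v, V i u * V i v * (V j u * V j v) = V i u * V j u * if i = j then 1 else 0 := by
      intro j
      rw [← orth, mul_sum]
      exact sum_congr rfl fun _ _ => by ring
    simp_rw [this]
    simp [hi]
  · intro u v
    exact sum_congr rfl fun _ _ => mul_comm _ _
  · rw [sum_comm]
    simp [orth]
  · simp_rw [eig]
    rw [← sum_div, sum_comm]
    congr 1
    refine sum_congr rfl fun u _ => ?_
    rw [sum_comm]
    refine sum_congr rfl fun v _ => ?_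
    split_ifs
    · rw [mul_sum, ← sum_add_distrib, ← sum_sub_distrib, one_mul]
      exact sum_congr rfl fun _ _ => by ring
    · simp

/-- for `k ≥ 1`, `Δ ≥ 0`, and a graph `G` with at least `k` vertices and
maximum degree at most `Δ`, `∑_{i=1}^k λ_i(L(G)) ≤ |E| + k·min{Δ,k}`. -/
theorem sum_lapEigs_le_of_maxDegree {n : ℕ} (G : SimpleGraph (Fin n)) [DecidableRel G.Adj]
    (Δ : ℕ) (hΔ : ∀ v : Fin n, G.degree v ≤ Δ) (k : ℕ) (hk1 : 1 ≤ k) (hk2 : k ≤ n) :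
    ∑ i ∈ Finset.Icc 1 k, ithLargest (lapEigs G) i ≤
      (G.edgeFinset.card : ℝ) + (k : ℝ) * min (Δ : ℝ) (k : ℝ) := by
  obtain ⟨J, hJ, hsum⟩ := exists_top (lapEigs G) k hk1 hk2
  rw [hsum]
  obtain ⟨P, idem, symm, tr, hP⟩ := exists_P G J
  rw [hJ] at tr
  set c : Fin n → Fin n → ℝ := fun u v => if G.Adj u v then (1:ℝ) else 0 with hc
  have hc1 : ∀ u v, c u v = 0 ∨ (c u v = 1 ∧ u ≠ v) := by
    intro u v
    by_cases h : G.Adj u v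
    · exact Or.inr ⟨by simp [hc, h], h.ne⟩
    · exact Or.inl (by simp [hc, h])
  have hc2 : ∀ u v, c u v = c v u := by
    intro u v
    simp only [hc, G.adj_comm]
  have hdeg : ∀ u, ∑ v, c u v = G.degree u := by
    intro u
    rw [SimpleGraph.degree_eq_sum_if_adj]
  have hE : ∑ u, ∑ v, c u v = 2 * (G.edgeFinset.card : ℝ) := by
    simp_rw [hdeg]
    exact_mod_cast G.sum_degrees_eq_twice_card_edges
  have split : ∑ u, ∑ v, c u v * (P u u + P v v - 2 * P u v - 1) =
      ∑ u, ∑ v, c u v * (P u u + P v v - 2 * P u v) - 2 * (G.edgeFinset.card : ℝ) := by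
    rw [← hE, ← sum_sub_distrib]
    refine sum_congr rfl fun u _ => ?_
    rw [← sum_sub_distrib]
    exact sum_congr rfl fun v _ => by ring
  have b1 := core_deg P k idem tr Δ c hc2 hc1 (fun u => by rw [hdeg]; exact_mod_cast hΔ u)
  have b2 : ∑ j ∈ J, lapEigs G j ≤ (G.edgeFinset.card : ℝ) + (k:ℝ) * k := by
    rcases hk1.eq_or_lt with h | h
    · rw [← h] at hJ ⊢
      obtain ⟨j, rfl⟩ := card_eq_one.1 hJ
      rw [sum_singleton]
      set hA := (SimpleGraph.posSemidef_lapMatrix ℝ G).isHermitian with hhA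
      have e := eig_le G (fun u => hA.eigenvectorBasis j u) (fun h0 => by
        have h1 : hA.eigenvectorBasis j = 0 := by
          ext u; exact congrFun h0 u
        exact hA.eigenvectorBasis.orthonormal.ne_zero j h1) (lapEigs G j) (fun u => by
        have := congrFun (hA.mulVec_eigenvectorBasis j) u
        rw [SimpleGraph.lapMatrix_mulVec_apply] at this
        exact this)
      simpa using e
    · have := core_sq P k idem symm tr h c hc1
      nlinarith
  rcases min_choice (Δ:ℝ) (k:ℝ) with h | h
  · rw [h]; linarith
  · rw [h]; exact b2
end

section
/- Let k ≥ 1 and let G = (V,E) be a finite simple graph with |V| ≥ k that is square-free, i.e., contains no cycle of length 4. Then ∑_{i=1}^{k} λ_i(L(G)) ≤ |E| + ⌊k(1 + √(8k − 3))/2⌋. -/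
open Finset

lemma sqf_common {n : ℕ} (G : SimpleGraph (Fin n))
    (hG : ∀ (v : Fin n) (c : G.Walk v v), c.IsCycle → c.length ≠ 4)
    {u w v v' : Fin n} (huw : u ≠ w) (h1 : G.Adj u v) (h2 : G.Adj w v)
    (h3 : G.Adj u v') (h4 : G.Adj w v') : v = v' := by
  by_contra hne
  have := hG u (.cons h1 (.cons h2.symm (.cons h4 (.cons h3.symm .nil)))) (by
    have := h1.ne; have := h2.ne; have := h3.ne; have := h4.ne
    simp [SimpleGraph.Walk.cons_isCycle_iff]
    grind)
  simp at this

lemma round_step2 {n : ℕ} (F : (Fin n → ℝ) → ℝ) (hF : ConvexOn ℝ Set.univ F)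
    (x d : Fin n → ℝ) (α β : ℝ) (hα : 0 < α) (hβ : 0 < β) :
    F x ≤ F (x + α • d) ∨ F x ≤ F (x - β • d) := by
  rw [← le_max_iff]
  apply hF.le_max_of_mem_segment (Set.mem_univ _) (Set.mem_univ _)
  refine ⟨β / (α + β), α / (α + β), by positivity, by positivity, by field_simp; ring, ?_⟩
  ext i
  simp
  field_simp
  ring

lemma rounding {n : ℕ} (F : (Fin n → ℝ) → ℝ) (hF : ConvexOn ℝ Set.univ F) (A B : ℕ) :
    ∀ (N : ℕ) (x : Fin n → ℝ), (∀ i, 0 ≤ x i) → (∀ i, x i ≤ 1) → (A : ℝ) ≤ ∑ i, x i →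
    ∑ i, x i ≤ B → #{i | x i ≠ 0 ∧ x i ≠ 1} ≤ N →
    ∃ U : Finset (Fin n), A ≤ #U ∧ #U ≤ B ∧ F x ≤ F (fun i => if i ∈ U then 1 else 0) := by
  intro N
  have base : ∀ (x : Fin n → ℝ), (A : ℝ) ≤ ∑ i, x i →
    ∑ i, x i ≤ B → (∀ i, x i = 0 ∨ x i = 1) →
    ∃ U : Finset (Fin n), A ≤ #U ∧ #U ≤ B ∧ F x ≤ F (fun i => if i ∈ U then 1 else 0) := by
    intro x hA hB h
    have hx : x = fun i => if i ∈ (Finset.univ.filter (fun i => x i = 1)) then 1 else 0 := by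
      ext i
      rcases h i with h | h <;> simp [h]
    have hs : ∑ i, x i = #(Finset.univ.filter (fun i => x i = 1)) := by
      conv_lhs => rw [hx]
      simp
    refine ⟨Finset.univ.filter (fun i => x i = 1), ?_, ?_, ?_⟩
    · rw [hs] at hA; exact_mod_cast hA
    · rw [hs] at hB; exact_mod_cast hB
    · rw [← hx]
  induction N with
  | zero =>
    intro x h0 h1 hA hB hN
    apply base x hA hB
    intro i
    simp at hN
    have := hN (x := i)
    tauto
  | succ N ih =>
    intro x h0 h1 hA hB hN
    by_cases hfr : ∃ i, x i ≠ 0 ∧ x i ≠ 1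
    swap
    · apply base x hA hB
      intro i
      by_contra h
      exact hfr ⟨i, by tauto⟩
    obtain ⟨i, hi0, hi1⟩ := hfr
    have pi0 : 0 < x i := lt_of_le_of_ne (h0 i) (Ne.symm hi0)
    have pi1 : x i < 1 := lt_of_le_of_ne (h1 i) hi1
    -- reduction of the count
    have red : ∀ y : Fin n → ℝ, (∃ j, (x j ≠ 0 ∧ x j ≠ 1) ∧ (y j = 0 ∨ y j = 1)) →
        (∀ j, (x j = 0 ∨ x j = 1) → y j = x j) → #{i | y i ≠ 0 ∧ y i ≠ 1} ≤ N := by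
      rintro y ⟨j, hj, hj'⟩ hy
      have : #{i | y i ≠ 0 ∧ y i ≠ 1} < #{i | x i ≠ 0 ∧ x i ≠ 1} := by
        apply Finset.card_lt_card
        rw [Finset.ssubset_iff_of_subset]
        · exact ⟨j, by simpa using hj, by simp; tauto⟩
        · intro l
          simp
          intro a b
          by_contra hc
          have := hy l (by tauto)
          rw [this] at a b
          tauto
      omega
    have fin : ∀ y : Fin n → ℝ, F x ≤ F y → (∀ i, 0 ≤ y i) → (∀ i, y i ≤ 1) → 
        (A : ℝ) ≤ ∑ i, y i → ∑ i, y i ≤ B → 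
        (∃ j, (x j ≠ 0 ∧ x j ≠ 1) ∧ (y j = 0 ∨ y j = 1)) →
        (∀ j, (x j = 0 ∨ x j = 1) → y j = x j) → 
        ∃ U : Finset (Fin n), A ≤ #U ∧ #U ≤ B ∧ F x ≤ F (fun i => if i ∈ U then 1 else 0) := by
      intro y hxy y0 y1 yA yB e1 e2
      obtain ⟨U, a, b, c⟩ := ih y y0 y1 yA yB (red y e1 e2)
      exact ⟨U, a, b, hxy.trans c⟩
    by_cases h2 : ∃ j, j ≠ i ∧ x j ≠ 0 ∧ x j ≠ 1
    · obtain ⟨j, hji, hj0, hj1⟩ := h2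
      have pj0 : 0 < x j := lt_of_le_of_ne (h0 j) (Ne.symm hj0)
      have pj1 : x j < 1 := lt_of_le_of_ne (h1 j) hj1
      set d : Fin n → ℝ := Pi.single i 1 - Pi.single j 1 with hd
      have di : d i = 1 := by simp [hd, hji.symm]
      have dj : d j = -1 := by simp [hd, hji]
      have dl : ∀ l, l ≠ i → l ≠ j → d l = 0 := by
        intro l a b; simp [hd, a, b]
      have ds : ∑ l, d l = 0 := by simp [hd]
      have hα : 0 < min (1 - x i) (x j) := lt_min (by linarith) pj0
      have hβ : 0 < min (x i) (1 - x j) := lt_min pi0 (by linarith)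
      rcases round_step2 F hF x d _ _ hα hβ with h | h
      · have a1 := min_le_left (1 - x i) (x j)
        have a2 := min_le_right (1 - x i) (x j)
        refine fin _ h ?_ ?_ ?_ ?_ ?_ ?_
        · intro l
          by_cases e1 : l = i
          · subst e1; simp [di]; linarith
          by_cases e2 : l = j
          · subst e2; simp [dj]
          · simp [dl l e1 e2, h0 l]
        · intro l
          by_cases e1 : l = i
          · subst e1; simp only [Pi.add_apply, Pi.smul_apply, smul_eq_mul, di]; linarith
          by_cases e2 : l = j
          · subst e2; simp only [Pi.add_apply, Pi.smul_apply, smul_eq_mul, dj]; linarith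
          · simp [dl l e1 e2, h1 l]
        · simp [Finset.sum_add_distrib, ← Finset.mul_sum, ds, hA]
        · simp [Finset.sum_add_distrib, ← Finset.mul_sum, ds, hB]
        · rcases min_choice (1 - x i) (x j) with e | e
          · exact ⟨i, ⟨hi0, hi1⟩, Or.inr (by simp [di, e])⟩
          · exact ⟨j, ⟨hj0, hj1⟩, Or.inl (by simp [dj, e])⟩
        · intro l hl
          have e1 : l ≠ i := by rintro rfl; tauto
          have e2 : l ≠ j := by rintro rfl; tauto
          simp [dl l e1 e2]
      · have a1 := min_le_left (x i) (1 - x j)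
        have a2 := min_le_right (x i) (1 - x j)
        refine fin _ h ?_ ?_ ?_ ?_ ?_ ?_
        · intro l
          by_cases e1 : l = i
          · subst e1; simp [di]
          by_cases e2 : l = j
          · subst e2; simp only [Pi.sub_apply, Pi.smul_apply, smul_eq_mul, dj]; linarith
          · simp [dl l e1 e2, h0 l]
        · intro l
          by_cases e1 : l = i
          · subst e1; simp only [Pi.sub_apply, Pi.smul_apply, smul_eq_mul, di]; linarith
          by_cases e2 : l = j
          · subst e2; simp only [Pi.sub_apply, Pi.smul_apply, smul_eq_mul, dj]; linarith
          · simp [dl l e1 e2, h1 l]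
        · simp [Finset.sum_sub_distrib, ← Finset.mul_sum, ds, hA]
        · simp [Finset.sum_sub_distrib, ← Finset.mul_sum, ds, hB]
        · rcases min_choice (x i) (1 - x j) with e | e
          · exact ⟨i, ⟨hi0, hi1⟩, Or.inl (by simp [di, e])⟩
          · exact ⟨j, ⟨hj0, hj1⟩, Or.inr (by simp [dj, e])⟩
        · intro l hl
          have e1 : l ≠ i := by rintro rfl; tauto
          have e2 : l ≠ j := by rintro rfl; tauto
          simp [dl l e1 e2]
    · have hoth : ∀ j, j ≠ i → x j = 0 ∨ x j = 1 := by
        intro j hj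
        by_contra hc
        exact h2 ⟨j, hj, by tauto⟩
      have hint : ∃ m : ℕ, ∑ l, x l = m + x i := by
        refine ⟨#{l | l ≠ i ∧ x l = 1}, ?_⟩
        rw [← Finset.sum_erase_add _ _ (Finset.mem_univ i)]
        congr 1
        rw [Finset.card_eq_sum_ones, Finset.sum_filter]
        push_cast
        rw [← Finset.sum_erase_add _ _ (Finset.mem_univ i)]
        simp only [ne_eq, not_true_eq_false, false_and, if_false, add_zero]
        apply Finset.sum_congr rfl
        intro l hl
        have hl' := Finset.ne_of_mem_erase hl
        rcases hoth l hl' with h | h <;> simp [h, hl']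
      obtain ⟨m, hm⟩ := hint
      have mA : A ≤ m := by
        have : (A : ℝ) < (m + 1 : ℕ) := by push_cast; linarith
        have := Nat.cast_lt.mp this
        omega
      have mB : m + 1 ≤ B := by
        have : (m : ℝ) < (B : ℕ) := by linarith
        exact Nat.cast_lt.mp this
      have mA' : (A : ℝ) ≤ m := by exact_mod_cast mA
      have mB' : (m : ℝ) + 1 ≤ B := by exact_mod_cast mB
      set d : Fin n → ℝ := Pi.single i 1 with hd
      have di : d i = 1 := by simp [hd]
      have dl : ∀ l, l ≠ i → d l = 0 := by
        intro l a; simp [hd, a]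
      have ds : ∑ l, d l = 1 := by simp [hd]
      rcases round_step2 F hF x d (1 - x i) (x i) (by linarith) pi0 with h | h
      · refine fin _ h ?_ ?_ ?_ ?_ ⟨i, ⟨hi0, hi1⟩, Or.inr (by simp [di])⟩ ?_
        · intro l
          by_cases e1 : l = i
          · subst e1; simp [di]
          · simp [dl l e1, h0 l]
        · intro l
          by_cases e1 : l = i
          · subst e1; simp [di]
          · simp [dl l e1, h1 l]
        · simp [Finset.sum_add_distrib, ← Finset.mul_sum, ds, hm]; linarith
        · simp [Finset.sum_add_distrib, ← Finset.mul_sum, ds, hm]; linarith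
        · intro l hl
          have e1 : l ≠ i := by rintro rfl; tauto
          simp [dl l e1]
      · refine fin _ h ?_ ?_ ?_ ?_ ⟨i, ⟨hi0, hi1⟩, Or.inl (by simp [di])⟩ ?_
        · intro l
          by_cases e1 : l = i
          · subst e1; simp [di]
          · simp [dl l e1, h0 l]
        · intro l
          by_cases e1 : l = i
          · subst e1; simp [di]
          · simp [dl l e1, h1 l]
        · simp [Finset.sum_sub_distrib, ← Finset.mul_sum, ds, hm]; linarith
        · simp [Finset.sum_sub_distrib, ← Finset.mul_sum, ds, hm]; linarith
        · intro l hl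
          have e1 : l ≠ i := by rintro rfl; tauto
          simp [dl l e1]

/-- star inequality -/
lemma star_ineq {ι : Type*} (T : Finset ι) (b q : ι → ℝ) (p : ℝ) (hp : 1 / 2 ≤ p) (hp1 : p ≤ 1)
    (hq : ∀ v ∈ T, 0 ≤ q v) (hb : ∀ v ∈ T, b v ^ 2 ≤ p * q v)
    (hs : ∑ v ∈ T, b v ^ 2 ≤ p * (1 - p)) :
    ∑ v ∈ T, (p + q v - 1 - 2 * b v - 2 * q v) ≤ 2 * p - 1 := by
  set y := ∑ v ∈ T, q v with hy
  have hy0 : 0 ≤ y := Finset.sum_nonneg hq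
  have hs2 : ∑ v ∈ T, b v ^ 2 ≤ p * y := by
    rw [hy, Finset.mul_sum]; exact Finset.sum_le_sum hb
  rcases eq_or_lt_of_le hp1 with h | h
  · subst h
    have h0 : ∑ v ∈ T, b v ^ 2 = 0 := le_antisymm (by linarith) (Finset.sum_nonneg fun _ _ => sq_nonneg _)
    rw [Finset.sum_eq_zero_iff_of_nonneg (fun _ _ => sq_nonneg _)] at h0
    have : ∑ v ∈ T, (1 + q v - 1 - 2 * b v - 2 * q v) ≤ ∑ v ∈ T, 0 := by
      apply Finset.sum_le_sum
      intro v hv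
      have := pow_eq_zero_iff (two_ne_zero) |>.mp (h0 v hv)
      have := hq v hv
      linarith
    simp at this ⊢
    linarith
  · have hc : 0 < 1 - p := by linarith
    have key : ∑ v ∈ T, (p + q v - 1 - 2 * b v - 2 * q v) ≤ (∑ v ∈ T, b v ^ 2) / (1 - p) - y := by
      rw [hy, Finset.sum_div, ← Finset.sum_sub_distrib]
      apply Finset.sum_le_sum
      intro v hv
      have : 0 ≤ (b v + (1 - p)) ^ 2 / (1 - p) := by positivity
      have e : (b v + (1 - p)) ^ 2 / (1 - p) = b v ^ 2 / (1 - p) + 2 * b v + (1 - p) := by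
        field_simp
        ring
      linarith
    have k2 : (∑ v ∈ T, b v ^ 2) / (1 - p) ≤ y + (2 * p - 1) := by
      rw [div_le_iff₀ hc]
      rcases le_total y (1 - p) with g | g
      · nlinarith
      · nlinarith
    linarith

lemma excess {n : ℕ} (a : Fin n → Fin n → ℝ) (ha : ∀ u v, a u v = 0 ∨ a u v = 1)
    (hsym : ∀ u v, a u v = a v u) (hirr : ∀ u, a u u = 0)
    (P : Fin n → Fin n → ℝ) (hP : ∀ u v, P u v = P v u)
    (hsq : ∀ u, P u u = ∑ v, P u v ^ 2)
    (hcs : ∀ u v, P u v ^ 2 ≤ P u u * P v v)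
    (h2 : ∀ u v, u ≠ v → P u u + P v v - 2 * P u v ≤ 2) :
    ∑ u, ∑ v, a u v * (P u u + P v v - 2 * P u v - 1) ≤
      ∑ u, ∑ v, a u v * max 0 (min 1 (2 * P u u) + min 1 (2 * P v v) - 1)
       + 2 * ∑ u, (2 * P u u - min 1 (2 * P u u)) := by
  have p0 : ∀ u, 0 ≤ P u u := fun u => by rw [hsq]; positivity
  have p1 : ∀ u, P u u ≤ 1 := by
    intro u
    have : P u u ^ 2 ≤ P u u := by
      conv_rhs => rw [hsq]
      exact Finset.single_le_sum (f := fun v => P u v ^ 2) (fun _ _ => sq_nonneg _) (Finset.mem_univ u)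
    by_contra h
    nlinarith
  set x : Fin n → ℝ := fun u => min 1 (2 * P u u) with hx
  set H : Fin n → Fin n → ℝ := fun u v => a u v * (P u u + P v v - 2 * P u v - 1) -
    a u v * max 0 (x u + x v - 1) with hH
  have Hs : ∀ u v, H u v = H v u := by
    intro u v
    simp only [hH]
    rw [hsym u v, hP u v, add_comm (P u u), add_comm (x u)]
  set K : Fin n → Fin n → ℝ := fun u v => if 1 / 2 ≤ P u u ∧ P v v < 1 / 2 then H u v else 0 with hK
  have bnd : ∀ u v, H u v ≤ K u v + K v u := by
    intro u v
    by_cases hu : 1 / 2 ≤ P u u <;> by_cases hv : 1 / 2 ≤ P v v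
    · have : H u v ≤ 0 := by
        simp only [hH]
        rcases ha u v with h | h
        · simp [h]
        · have huv : u ≠ v := by rintro rfl; rw [hirr] at h; norm_num at h
          have e1 : x u = 1 := by simp only [hx]; apply min_eq_left; linarith
          have e2 : x v = 1 := by simp only [hx]; apply min_eq_left; linarith
          have := h2 u v huv
          rw [h, e1, e2]
          norm_num
          linarith
      simp only [hK, not_lt.mpr hu, not_lt.mpr hv, and_false, if_false]
      linarith
    · simp only [hK]
      rw [if_pos ⟨hu, by linarith⟩, if_neg (by tauto)]
      linarith
    · simp only [hK]
      rw [if_neg (by tauto), if_pos ⟨hv, by linarith⟩, Hs]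
      linarith
    · have : H u v ≤ 0 := by
        simp only [hH]
        rcases ha u v with h | h
        · simp [h]
        · have e1 : x u = 2 * P u u := by simp only [hx]; apply min_eq_right; linarith
          have e2 : x v = 2 * P v v := by simp only [hx]; apply min_eq_right; linarith
          have := hcs u v
          have h3 : -(2 * P u v) ≤ P u u + P v v := by
            have := (abs_le_of_sq_le_sq' (a := 2 * P u v) (b := P u u + P v v) (by nlinarith [sq_nonneg (P u u - P v v)]) (by linarith [p0 u, p0 v])).1
            linarith
          have := le_max_right 0 (x u + x v - 1)
          rw [h]
          linarith
      simp only [hK, hu, hv, false_and, if_false]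
      linarith
  have row : ∀ u, ∑ v, K u v ≤ 2 * P u u - x u := by
    intro u
    by_cases hu : 1 / 2 ≤ P u u
    · have e1 : x u = 1 := by simp only [hx]; apply min_eq_left; linarith
      rw [e1]
      have := star_ineq (Finset.univ.filter fun v => a u v = 1 ∧ P v v < 1 / 2) (fun v => P u v)
        (fun v => P v v) (P u u) hu (p1 u) (fun v _ => p0 v) (fun v _ => hcs u v) (by
          have h : ∑ v ∈ (Finset.univ.filter fun v => a u v = 1 ∧ P v v < 1 / 2), P u v ^ 2 ≤
            ∑ v ∈ Finset.univ.erase u, P u v ^ 2 := by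
            apply Finset.sum_le_sum_of_subset_of_nonneg
            · intro v hv
              simp at hv ⊢
              rintro rfl
              rw [hirr] at hv
              norm_num at hv
            · intros; positivity
          have h' := hsq u
          rw [← Finset.sum_erase_add _ _ (Finset.mem_univ u)] at h'
          nlinarith)
      refine le_trans (le_of_eq ?_) this
      rw [Finset.sum_filter]
      apply Finset.sum_congr rfl
      intro v _
      simp only [hK, hu, true_and]
      by_cases hv : P v v < 1 / 2
      · have e2 : x v = 2 * P v v := by simp only [hx]; apply min_eq_right; linarith
        have e3 : max 0 (x u + x v - 1) = 2 * P v v := by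
          rw [e1, e2, max_eq_right] <;> linarith [p0 v]
        simp only [hH, e3, hv, and_true, if_true]
        rcases ha u v with h | h
        · simp [h]
        · simp [h]; ring
      · rw [if_neg hv, if_neg (fun h => hv h.2)]
    · simp only [hK, hu, false_and, if_false, Finset.sum_const_zero]
      have : x u ≤ 2 * P u u := min_le_right _ _
      linarith
  have tot : ∑ u, ∑ v, H u v ≤ 2 * ∑ u, (2 * P u u - x u) := by
    calc ∑ u, ∑ v, H u v ≤ ∑ u, ∑ v, (K u v + K v u) :=
          Finset.sum_le_sum fun u _ => Finset.sum_le_sum fun v _ => bnd u v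
      _ = ∑ u, ∑ v, K u v + ∑ u, ∑ v, K v u := by simp only [Finset.sum_add_distrib]
      _ = 2 * ∑ u, ∑ v, K u v := by
          rw [Finset.sum_comm (f := fun u v => K v u)]; ring
      _ ≤ _ := by
          have := Finset.sum_le_sum fun u (_ : u ∈ Finset.univ) => row u
          linarith
  have : ∑ u, ∑ v, H u v = ∑ u, ∑ v, a u v * (P u u + P v v - 2 * P u v - 1) -
      ∑ u, ∑ v, a u v * max 0 (x u + x v - 1) := by
    simp only [hH, Finset.sum_sub_distrib]
  linarith

lemma spectral_part {n : ℕ} (G : SimpleGraph (Fin n)) [DecidableRel G.Adj] (S : Finset (Fin n)) :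
    ∃ P : Fin n → Fin n → ℝ, (∀ u v, P u v = P v u) ∧ (∀ u, P u u = ∑ v, P u v ^ 2) ∧
      (∀ u v, P u v ^ 2 ≤ P u u * P v v) ∧
      (∀ u v, u ≠ v → P u u + P v v - 2 * P u v ≤ 2) ∧
      (∑ u, P u u = #S) ∧
      2 * ∑ j ∈ S, lapEigs G j =
        ∑ u, ∑ v, (if G.Adj u v then (1 : ℝ) else 0) * (P u u + P v v - 2 * P u v) := by
  set hA := (SimpleGraph.posSemidef_lapMatrix ℝ G).isHermitian with hAdef
  set f : Fin n → Fin n → ℝ := fun j u => hA.eigenvectorBasis j u with hf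
  have col : ∀ i j, ∑ u, f i u * f j u = if i = j then 1 else 0 := by
    intro i j
    have h := congrFun (congrFun (Unitary.coe_star_mul_self hA.eigenvectorUnitary) i) j
    rw [Matrix.mul_apply, Matrix.one_apply] at h
    simpa [Matrix.star_apply] using h
  have row : ∀ u v, ∑ j, f j u * f j v = if u = v then 1 else 0 := by
    intro i j
    have h := congrFun (congrFun (Unitary.coe_mul_star_self hA.eigenvectorUnitary) i) j
    rw [Matrix.mul_apply, Matrix.one_apply] at h
    simpa [Matrix.star_apply] using h
  have diff : ∀ u v, ∑ j ∈ S, f j u * f j u + ∑ j ∈ S, f j v * f j v - 2 * ∑ j ∈ S, f j u * f j v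
      = ∑ j ∈ S, (f j u - f j v) ^ 2 := by
    intro u v
    rw [Finset.mul_sum, ← Finset.sum_add_distrib, ← Finset.sum_sub_distrib]
    apply Finset.sum_congr rfl
    intros; ring
  refine ⟨fun u v => ∑ j ∈ S, f j u * f j v, ?_, ?_, ?_, ?_, ?_, ?_⟩
  · intro u v
    simp only [mul_comm]
  · intro u
    have : ∀ v, (∑ j ∈ S, f j u * f j v) ^ 2 =
        ∑ i ∈ S, ∑ j ∈ S, (f i u * f j u) * (f i v * f j v) := by
      intro v
      rw [sq, Finset.sum_mul_sum]
      apply Finset.sum_congr rfl; intro i _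
      apply Finset.sum_congr rfl; intro j _
      ring
    simp only [this]
    rw [Finset.sum_comm]
    apply Finset.sum_congr rfl
    intro i hi
    rw [Finset.sum_comm]
    simp only [← Finset.mul_sum, col]
    simp [hi]
  · intro u v
    have := Finset.sum_mul_sq_le_sq_mul_sq S (fun j => f j u) (fun j => f j v)
    simpa [sq] using this
  · intro u v huv
    simp only [diff]
    calc ∑ j ∈ S, (f j u - f j v) ^ 2 ≤ ∑ j, (f j u - f j v) ^ 2 :=
          Finset.sum_le_sum_of_subset_of_nonneg (Finset.subset_univ _) (fun _ _ _ => sq_nonneg _)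
      _ = ∑ j, f j u * f j u + ∑ j, f j v * f j v - 2 * ∑ j, f j u * f j v := by
          rw [Finset.mul_sum, ← Finset.sum_add_distrib, ← Finset.sum_sub_distrib]
          apply Finset.sum_congr rfl
          intros; ring
      _ ≤ 2 := by
          rw [row, row, row]; simp [huv]; norm_num
  · rw [Finset.sum_comm]
    simp [col]
  · simp only [diff]
    have : ∀ j, 2 * lapEigs G j = ∑ u, ∑ v, (if G.Adj u v then (1 : ℝ) else 0) * (f j u - f j v) ^ 2 := by
      intro j
      have h := hA.eigenvalues_eq j
      have h' := SimpleGraph.lapMatrix_toLinearMap₂' ℝ G (f j)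
      rw [Matrix.toLinearMap₂'_apply'] at h'
      have : lapEigs G j = f j ⬝ᵥ (G.lapMatrix ℝ).mulVec (f j) := by
        rw [lapEigs, h]
        simp [hf]
      rw [this, h', mul_div_cancel₀ _ two_ne_zero]
      simp
    rw [Finset.mul_sum]
    simp only [this, Finset.mul_sum]
    rw [Finset.sum_comm]
    apply Finset.sum_congr rfl; intro u _
    rw [Finset.sum_comm]

lemma sum_ith {n : ℕ} (g : Fin n → ℝ) (k : ℕ) (hk : k ≤ n) :
    ∃ S : Finset (Fin n), #S = k ∧ ∑ i ∈ Finset.Icc 1 k, ithLargest g i = ∑ j ∈ S, g j := by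
  let φ : Fin k → Fin n := fun i => Tuple.sort g (Fin.rev (Fin.castLE hk i))
  have hφ : Function.Injective φ := by
    intro a b h
    simpa [φ] using h
  refine ⟨Finset.univ.image φ, by rw [Finset.card_image_of_injective _ hφ]; simp, ?_⟩
  rw [Finset.sum_image (fun a _ b _ h => hφ h)]
  rw [← Finset.Ico_add_one_right_eq_Icc, Finset.sum_Ico_eq_sum_range, Finset.sum_range]
  try simp only [Nat.add_sub_cancel]
  apply Finset.sum_congr rfl
  intro i _
  have : 1 ≤ 1 + (i : ℕ) ∧ 1 + (i : ℕ) ≤ n := by omega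
  rw [ithLargest, dif_pos this]
  simp only [φ]
  congr 3
  ext
  simp

lemma reiman_count {n : ℕ} (G : SimpleGraph (Fin n)) [DecidableRel G.Adj]
    (hG : ∀ (v : Fin n) (c : G.Walk v v), c.IsCycle → c.length ≠ 4) (U : Finset (Fin n))
    (N : ℝ) (hN : N = ∑ u ∈ U, ∑ v ∈ U, (if G.Adj u v then (1 : ℝ) else 0)) :
    N ^ 2 ≤ #U * (N + #U * (#U - 1)) := by
  set a : Fin n → Fin n → ℝ := fun u v => if G.Adj u v then (1 : ℝ) else 0 with ha
  have asym : ∀ u v, a u v = a v u := fun u v => by simp [ha, SimpleGraph.adj_comm]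
  have hN' : N = ∑ v ∈ U, ∑ u ∈ U, a u v := by rw [hN, Finset.sum_comm]
  have h1 : N ^ 2 ≤ #U * ∑ v ∈ U, (∑ u ∈ U, a u v) ^ 2 := by
    rw [hN']
    exact sq_sum_le_card_mul_sum_sq
  have h2 : ∑ v ∈ U, (∑ u ∈ U, a u v) ^ 2 = ∑ u ∈ U, ∑ w ∈ U, ∑ v ∈ U, a u v * a w v := by
    simp only [sq, Finset.sum_mul_sum]
    rw [Finset.sum_comm]
    apply Finset.sum_congr rfl; intro i _
    rw [Finset.sum_comm]
  have h3 : ∀ u w, ∑ v ∈ U, a u v * a w v ≤ if u = w then ∑ v ∈ U, a u v else 1 := by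
    intro u w
    split_ifs with h
    · subst h
      apply Finset.sum_le_sum; intro v _
      simp only [ha]; split_ifs <;> simp
    · have e : ∑ v ∈ U, a u v * a w v = #(U.filter fun v => G.Adj u v ∧ G.Adj w v) := by
        rw [Finset.card_filter]
        push_cast
        apply Finset.sum_congr rfl; intro v _
        simp only [ha]
        by_cases h1 : G.Adj u v <;> by_cases h2 : G.Adj w v <;> simp [h1, h2]
      rw [e]
      have : #(U.filter fun v => G.Adj u v ∧ G.Adj w v) ≤ 1 := by
        rw [Finset.card_le_one]
        intro x hx y hy
        simp at hx hy
        exact sqf_common G hG h hx.2.1 hx.2.2 hy.2.1 hy.2.2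
      exact_mod_cast this
  have h4 : ∑ u ∈ U, ∑ w ∈ U, ∑ v ∈ U, a u v * a w v ≤ N + #U * (#U - 1) := by
    calc _ ≤ ∑ u ∈ U, (∑ v ∈ U, a u v + (#U - 1)) := by
          apply Finset.sum_le_sum; intro u hu
          calc _ ≤ ∑ w ∈ U, (if u = w then ∑ v ∈ U, a u v else 1) :=
                Finset.sum_le_sum fun w _ => h3 u w
            _ = _ := by
                rw [← Finset.add_sum_erase _ _ hu, if_pos rfl]
                congr 1
                rw [Finset.sum_congr rfl (g := fun _ => (1 : ℝ))]
                · rw [Finset.sum_const, Finset.card_erase_of_mem hu, nsmul_eq_mul, mul_one,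
                    Nat.cast_sub (Finset.card_pos.mpr ⟨u, hu⟩)]
                  simp
                · intro w hw
                  rw [if_neg (Finset.ne_of_mem_erase hw).symm]
      _ = _ := by
          rw [Finset.sum_add_distrib, hN, Finset.sum_const, nsmul_eq_mul]
  calc _ ≤ _ := h1
    _ ≤ _ := by
      rw [h2]
      exact mul_le_mul_of_nonneg_left h4 (by positivity)

lemma reiman_even {n : ℕ} (G : SimpleGraph (Fin n)) [DecidableRel G.Adj] (U : Finset (Fin n)) :
    ∃ e : ℕ, ∑ u ∈ U, ∑ v ∈ U, (if G.Adj u v then (1 : ℝ) else 0) = 2 * e := by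
  refine ⟨∑ u ∈ U, ∑ v ∈ U, if G.Adj u v ∧ u < v then 1 else 0, ?_⟩
  have : ∑ u ∈ U, ∑ v ∈ U, (if G.Adj u v then (1 : ℝ) else 0) =
      ∑ u ∈ U, ∑ v ∈ U, (if G.Adj u v ∧ u < v then (1 : ℝ) else 0) +
      ∑ u ∈ U, ∑ v ∈ U, (if G.Adj v u ∧ v < u then (1 : ℝ) else 0) := by
    simp only [← Finset.sum_add_distrib]
    apply Finset.sum_congr rfl; intro u _
    apply Finset.sum_congr rfl; intro v _
    simp only [SimpleGraph.adj_comm G v u]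
    by_cases h : G.Adj u v
    · rcases lt_or_gt_of_ne h.ne with h' | h'
      · simp [h, h', h'.not_gt]
      · simp [h, h', h'.not_gt]
    · simp [h]
  rw [this, Finset.sum_comm (f := fun u v => if G.Adj v u ∧ v < u then (1 : ℝ) else 0)]
  push_cast
  ring

noncomputable def hfun (m : ℕ) : ℝ := m * (1 + Real.sqrt (4 * m - 3)) / 4

lemma hfun_step (m : ℕ) (hm : 1 ≤ m) : hfun m + 1 ≤ hfun (m + 1) := by
  have hm' : (1 : ℝ) ≤ m := by exact_mod_cast hm
  unfold hfun
  push_cast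
  have e : (4 * ((m : ℝ) + 1) - 3) = 4 * m + 1 := by ring
  rw [e]
  have hle : Real.sqrt (4 * m - 3) ≤ Real.sqrt (4 * m + 1) := Real.sqrt_le_sqrt (by linarith)
  rcases Nat.lt_or_ge 1 m with h | h
  · have h2 : (2 : ℝ) ≤ m := by exact_mod_cast h
    have : (3 : ℝ) ≤ Real.sqrt (4 * m + 1) := Real.le_sqrt_of_sq_le (by linarith)
    nlinarith
  · have : m = 1 := le_antisymm h hm
    subst this
    have : (2 : ℝ) ≤ Real.sqrt (4 * (1 : ℕ) + 1) := Real.le_sqrt_of_sq_le (by norm_num)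
    have h1 : Real.sqrt (4 * (1 : ℕ) - 3) = 1 := by norm_num
    rw [h1]
    generalize Real.sqrt (4 * (1 : ℕ) + 1) = s at this ⊢
    push_cast
    nlinarith

lemma hfun_steps (m : ℕ) (hm : 1 ≤ m) (r : ℕ) : hfun m + r ≤ hfun (m + r) := by
  induction r with
  | zero => simp
  | succ r ih =>
    have := hfun_step (m + r) (by omega)
    push_cast
    rw [← add_assoc m r 1]
    linarith

lemma reiman_hfun (m e : ℝ) (m' : ℕ) (hmm : m = m') (hm : 1 ≤ m)
    (h : (2 * e) ^ 2 ≤ m * (2 * e + m * (m - 1))) : e ≤ hfun m' := by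
  unfold hfun
  rw [← hmm]
  have : 4 * e - m ≤ m * Real.sqrt (4 * m - 3) := by
    have h2 : m * Real.sqrt (4 * m - 3) = Real.sqrt (m ^ 2 * (4 * m - 3)) := by
      rw [Real.sqrt_mul (by positivity), Real.sqrt_sq (by linarith)]
    rw [h2]
    apply Real.le_sqrt_of_sq_le
    nlinarith
  linarith

lemma convex_part {n : ℕ} (a : Fin n → Fin n → ℝ) (ha : ∀ u v, 0 ≤ a u v) :
    ConvexOn ℝ Set.univ (fun x : Fin n → ℝ => ∑ u, ∑ v, a u v * max 0 (x u + x v - 1) - 2 * ∑ u, x u) := by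
  refine ⟨convex_univ, ?_⟩
  intro x _ y _ s t hs ht hst
  simp only [smul_eq_mul, Pi.add_apply, Pi.smul_apply]
  have h1 : ∀ u v, a u v * max 0 (s * x u + t * y u + (s * x v + t * y v) - 1) ≤
      s * (a u v * max 0 (x u + x v - 1)) + t * (a u v * max 0 (y u + y v - 1)) := by
    intro u v
    have : max 0 (s * x u + t * y u + (s * x v + t * y v) - 1) ≤
        s * max 0 (x u + x v - 1) + t * max 0 (y u + y v - 1) := by
      have a1 := le_max_left 0 (x u + x v - 1)
      have a2 := le_max_right 0 (x u + x v - 1)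
      have b1 := le_max_left 0 (y u + y v - 1)
      have b2 := le_max_right 0 (y u + y v - 1)
      apply max_le
      · positivity
      · have := mul_le_mul_of_nonneg_left a2 hs
        have := mul_le_mul_of_nonneg_left b2 ht
        nlinarith
    have := mul_le_mul_of_nonneg_left this (ha u v)
    linarith
  have h2 := Finset.sum_le_sum fun u (_ : u ∈ Finset.univ) =>
    Finset.sum_le_sum fun v (_ : v ∈ Finset.univ) => h1 u v
  simp only [Finset.sum_add_distrib, ← Finset.mul_sum] at h2 ⊢
  linarith

/-- for `k ≥ 1` and a square-free graph `G` (no cycle of length 4) with at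
least `k` vertices, `∑_{i=1}^k λ_i(L(G)) ≤ |E| + ⌊k(1 + √(8k − 3))/2⌋`. -/
theorem sum_lapEigs_le_of_squareFree {n : ℕ} (G : SimpleGraph (Fin n)) [DecidableRel G.Adj]
    (hG : ∀ (v : Fin n) (c : G.Walk v v), c.IsCycle → c.length ≠ 4)
    (k : ℕ) (hk1 : 1 ≤ k) (hk2 : k ≤ n) :
    ∑ i ∈ Finset.Icc 1 k, ithLargest (lapEigs G) i ≤
      (G.edgeFinset.card : ℝ) +
        (⌊(k : ℝ) * (1 + Real.sqrt (8 * (k : ℝ) - 3)) / 2⌋ : ℝ) := by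
  obtain ⟨S, hS, hsum⟩ := sum_ith (lapEigs G) k hk2
  rw [hsum]
  obtain ⟨P, hP, hsq, hcs, h2, htr, htot⟩ := spectral_part G S
  rw [hS] at htr
  set a : Fin n → Fin n → ℝ := fun u v => if G.Adj u v then (1 : ℝ) else 0 with ha
  have asym : ∀ u v, a u v = a v u := fun u v => by simp [ha, SimpleGraph.adj_comm]
  have a01 : ∀ u v, a u v = 0 ∨ a u v = 1 := fun u v => by
    simp only [ha]; split_ifs <;> simp
  have a0 : ∀ u v, 0 ≤ a u v := fun u v => by
    simp only [ha]; split_ifs <;> simp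
  have hexc := excess a a01 asym (fun u => by simp [ha]) P hP hsq hcs h2
  have hE : ∑ u, ∑ v, a u v = 2 * (G.edgeFinset.card : ℝ) := by
    have h := G.sum_degrees_eq_twice_card_edges
    have h' : ((∑ v, G.degree v : ℕ) : ℝ) = 2 * (G.edgeFinset.card : ℝ) := by
      rw [h]; push_cast; rfl
    rw [← h']
    push_cast
    apply Finset.sum_congr rfl; intro u _
    rw [SimpleGraph.degree_eq_sum_if_adj]
  set x : Fin n → ℝ := fun u => min 1 (2 * P u u) with hx
  have p0 : ∀ u, 0 ≤ P u u := fun u => by rw [hsq]; positivity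
  have p1 : ∀ u, P u u ≤ 1 := by
    intro u
    have : P u u ^ 2 ≤ P u u := by
      conv_rhs => rw [hsq]
      exact Finset.single_le_sum (f := fun v => P u v ^ 2) (fun _ _ => sq_nonneg _) (Finset.mem_univ u)
    by_contra h
    nlinarith
  have xA : (k : ℝ) ≤ ∑ u, x u := by
    rw [← htr]
    apply Finset.sum_le_sum; intro u _
    exact le_min (p1 u) (by linarith [p0 u])
  have xB : ∑ u, x u ≤ (2 * k : ℕ) := by
    push_cast
    rw [← htr, Finset.mul_sum]
    apply Finset.sum_le_sum; intro u _
    exact min_le_right _ _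
  obtain ⟨U, hUA, hUB, hU⟩ := rounding _ (convex_part a a0) k (2 * k) _ x
    (fun u => le_min zero_le_one (by linarith [p0 u])) (fun u => min_le_left _ _) xA xB le_rfl
  obtain ⟨e, he⟩ := reiman_even G U
  have hind : ∑ u, ∑ v, a u v * max 0 ((if u ∈ U then (1 : ℝ) else 0) + (if v ∈ U then 1 else 0) - 1)
      = 2 * e := by
    rw [← he]
    rw [← Finset.sum_subset (Finset.subset_univ U)]
    · apply Finset.sum_congr rfl; intro u hu
      rw [← Finset.sum_subset (Finset.subset_univ U)]
      · apply Finset.sum_congr rfl; intro v hv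
        simp [hu, hv, ha]
      · intro v _ hv
        simp [hu, hv]
    · intro u _ hu
      apply Finset.sum_eq_zero; intro v _
      by_cases hv : v ∈ U <;> simp [hu, hv]
  have hcard : ∑ u, (if u ∈ U then (1 : ℝ) else 0) = #U := by simp
  simp only [hind, hcard] at hU
  have hm1 : 1 ≤ #U := by omega
  have hre := reiman_hfun (#U : ℝ) (e : ℝ) #U rfl (by exact_mod_cast hm1)
    (reiman_count G hG U _ he.symm)
  obtain ⟨r, hr⟩ := Nat.exists_eq_add_of_le hUB
  have hst := hfun_steps #U hm1 r
  rw [← hr] at hst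
  have hh : hfun (2 * k) = (k : ℝ) * (1 + Real.sqrt (8 * (k : ℝ) - 3)) / 2 := by
    unfold hfun
    push_cast
    rw [show (4 * (2 * (k : ℝ)) - 3) = 8 * k - 3 by ring]
    ring
  rw [hh] at hst
  have hfl : ((e + r : ℕ) : ℤ) ≤ ⌊(k : ℝ) * (1 + Real.sqrt (8 * (k : ℝ) - 3)) / 2⌋ := by
    rw [Int.le_floor]
    push_cast
    linarith
  have hfl' : (e : ℝ) + r ≤ (⌊(k : ℝ) * (1 + Real.sqrt (8 * (k : ℝ) - 3)) / 2⌋ : ℝ) := by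
    exact_mod_cast hfl
  have hr' : (2 * k : ℝ) = #U + r := by exact_mod_cast hr
  have hsplit : ∑ u, ∑ v, a u v * (P u u + P v v - 2 * P u v - 1) =
      ∑ u, ∑ v, a u v * (P u u + P v v - 2 * P u v) - ∑ u, ∑ v, a u v := by
    simp only [← Finset.sum_sub_distrib]
    apply Finset.sum_congr rfl; intro u _
    apply Finset.sum_congr rfl; intro v _
    ring
  have hlin : ∑ u, (2 * P u u - min 1 (2 * P u u)) = 2 * k - ∑ u, x u := by
    rw [Finset.sum_sub_distrib, ← Finset.mul_sum, htr]
  rw [hsplit, hE, ← htot, hlin] at hexc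
  linarith
end

section
/- Let k ≥ 1 and let G = (V,E) be a finite simple graph with |V| ≥ k whose girth is at least 5, i.e., G contains no cycle of length smaller than 5. Then ∑_{i=1}^{k} λ_i(L(G)) ≤ |E| + ⌊k√(2k − 1)⌋. -/
open Finset

lemma gA {n : ℕ} (G : SimpleGraph (Fin n))
    (hG : ∀ (v : Fin n) (c : G.Walk v v), c.IsCycle → 5 ≤ c.length) :
    (∀ u v w, G.Adj u v → G.Adj v w → G.Adj w u → False) ∧
    (∀ u v w x, u ≠ w → v ≠ x → G.Adj u v → G.Adj v w → G.Adj w x → G.Adj x u → False) := by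
  constructor
  · intro u v w h1 h2 h3
    have := hG u (.cons h1 (.cons h2 (.cons h3 .nil))) (by
      have := h1.ne; have := h2.ne; have := h3.ne
      rw [SimpleGraph.Walk.cons_isCycle_iff]
      simp [SimpleGraph.Walk.isPath_def]
      grind)
    simp at this
  · intro u v w x huw hvx h1 h2 h3 h4
    have := hG u (.cons h1 (.cons h2 (.cons h3 (.cons h4 .nil)))) (by
      have := h1.ne; have := h2.ne; have := h3.ne; have := h4.ne
      rw [SimpleGraph.Walk.cons_isCycle_iff]
      simp [SimpleGraph.Walk.isPath_def]
      grind)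
    simp at this

lemma exS {n : ℕ} (f : Fin n → ℝ) (k : ℕ) (hk : k ≤ n) :
    ∃ S : Finset (Fin n), #S ≤ k ∧ ∑ i ∈ Finset.Icc 1 k, ithLargest f i = ∑ j ∈ S, f j := by
  let g : Fin k → Fin n := fun i => Tuple.sort f (Fin.rev ⟨i, by omega⟩)
  have hg : Function.Injective g := by
    intro a b h
    simp [g] at h
    exact Fin.ext h
  refine ⟨Finset.univ.image g, ?_, ?_⟩
  · exact Finset.card_image_le.trans (by simp)
  · rw [Finset.sum_image (fun a _ b _ h => hg h)]
    have : Finset.Icc 1 k = (Finset.univ : Finset (Fin k)).image (fun i : Fin k => (i : ℕ) + 1) := by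
      ext i; simp only [Finset.mem_Icc, Finset.mem_image, Finset.mem_univ, true_and]
      constructor
      · rintro ⟨h1, h2⟩; exact ⟨⟨i - 1, by omega⟩, by simp; omega⟩
      · rintro ⟨a, rfl⟩; omega
    rw [this, Finset.sum_image (by intro a _ b _ h; exact Fin.ext (by simpa using h))]
    refine Finset.sum_congr rfl fun i _ => ?_
    have h : 1 ≤ (i : ℕ) + 1 ∧ (i : ℕ) + 1 ≤ n := by omega
    simp only [ithLargest, g]
    rw [dif_pos h]
    rfl

/-- fractional knapsack -/
lemma knap {n : ℕ} (d w : Fin n → ℝ) (N : ℕ) (hd : ∀ v, 0 ≤ d v) (h0 : ∀ v, 0 ≤ w v)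
    (h1 : ∀ v, w v ≤ 1) (hs : ∑ v, w v ≤ N) :
    ∃ U : Finset (Fin n), #U ≤ N ∧ ∑ v, d v * w v ≤ ∑ v ∈ U, d v := by
  by_cases hN : n ≤ N
  · refine ⟨Finset.univ, by simpa using hN, ?_⟩
    exact Finset.sum_le_sum fun v _ => mul_le_of_le_one_right (hd v) (h1 v)
  push Not at hN
  obtain ⟨U, hU, hmax⟩ := Finset.exists_max_image (Finset.univ.powersetCard N)
    (fun U : Finset (Fin n) => ∑ v ∈ U, d v)
    (by rw [Finset.powersetCard_nonempty]; simpa using hN.le)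
  rw [Finset.mem_powersetCard] at hU
  have hex : ∀ u ∈ U, ∀ v ∉ U, d v ≤ d u := by
    intro u hu v hv
    have hv' : v ∉ U.erase u := fun h => hv (Finset.mem_of_mem_erase h)
    have := hmax (insert v (U.erase u)) (by
      rw [Finset.mem_powersetCard]
      refine ⟨by simp, ?_⟩
      rw [Finset.card_insert_of_notMem hv', Finset.card_erase_of_mem hu, hU.2]
      have : 0 < #U := Finset.card_pos.mpr ⟨u, hu⟩
      omega)
    simp only [Finset.sum_insert hv'] at this
    have h2 := Finset.add_sum_erase U d hu
    linarith
  refine ⟨U, hU.2.le, ?_⟩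
  obtain ⟨t, ht0, ht1, ht2⟩ : ∃ t : ℝ, 0 ≤ t ∧ (∀ u ∈ U, t ≤ d u) ∧ (∀ v ∉ U, d v ≤ t) := by
    have hne : (Uᶜ).Nonempty := by
      rw [← Finset.card_pos, Finset.card_compl, hU.2]; simpa using hN
    obtain ⟨v, hv, hvm⟩ := Finset.exists_max_image Uᶜ d hne
    exact ⟨d v, hd v, fun u hu => hex u hu v (by simpa using hv),
      fun x hx => hvm x (by simpa using hx)⟩
  have key : ∀ v, d v * w v ≤ t * w v + (if v ∈ U then d v - t else 0) := by
    intro v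
    split_ifs with h
    · nlinarith [ht1 v h, h1 v]
    · nlinarith [ht2 v h, h0 v]
  calc _ ≤ ∑ v, (t * w v + (if v ∈ U then d v - t else 0)) := Finset.sum_le_sum fun v _ => key v
    _ = t * ∑ v, w v + (∑ v ∈ U, d v - N * t) := by
      rw [Finset.sum_add_distrib, Finset.mul_sum, Finset.sum_ite_mem, Finset.univ_inter,
        Finset.sum_sub_distrib]
      simp [hU.2]
    _ ≤ _ := by nlinarith

lemma comb {n : ℕ} (G : SimpleGraph (Fin n)) [DecidableRel G.Adj]
    (hG : ∀ (v : Fin n) (c : G.Walk v v), c.IsCycle → 5 ≤ c.length)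
    (U : Finset (Fin n)) :
    2 * ∑ v ∈ U, (G.degree v : ℝ) - 2 * (G.edgeFinset.card : ℝ)
      ≤ √((#U : ℝ) * (#U * (#U - 1))) := by
  obtain ⟨h3, h4⟩ := gA G hG
  let a : Fin n → Fin n → ℝ := fun u v => if G.Adj u v then 1 else 0
  have asymm : ∀ u v, a u v = a v u := fun u v => by simp [a, G.adj_comm]
  have a0 : ∀ u v, 0 ≤ a u v := fun u v => by simp only [a]; split_ifs <;> norm_num
  have hdeg : ∀ v, (G.degree v : ℝ) = ∑ u, a v u := by
    intro v; simp [a, SimpleGraph.degree, SimpleGraph.neighborFinset_eq_filter]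
  have hE : 2 * (G.edgeFinset.card : ℝ) = ∑ v, ∑ u, a v u := by
    have := G.sum_degrees_eq_twice_card_edges
    simp_rw [← hdeg]
    exact_mod_cast this.symm
  set T := ∑ v ∈ U, ∑ u ∈ U, a v u with hT
  have hTle : 2 * ∑ v ∈ U, (G.degree v : ℝ) - 2 * (G.edgeFinset.card : ℝ) ≤ T := by
    rw [hE]
    simp_rw [hdeg]
    have e1 : ∀ v, ∑ u, a v u = ∑ u ∈ U, a v u + ∑ u ∈ Uᶜ, a v u :=
      fun v => (Finset.sum_add_sum_compl U _).symm
    have e2 := Finset.sum_add_sum_compl U (fun v => ∑ u, a v u)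
    have e3 : ∑ v ∈ U, ∑ u ∈ Uᶜ, a v u = ∑ v ∈ Uᶜ, ∑ u ∈ U, a v u := by
      rw [Finset.sum_comm]; simp_rw [asymm]
    have e4 : ∑ v ∈ U, ∑ u, a v u = T + ∑ v ∈ U, ∑ u ∈ Uᶜ, a v u := by
      simp_rw [e1, Finset.sum_add_distrib]; rfl
    have e5 : ∑ v ∈ Uᶜ, ∑ u ∈ U, a v u ≤ ∑ v ∈ Uᶜ, ∑ u, a v u :=
      Finset.sum_le_sum fun v _ => Finset.sum_le_univ_sum_of_nonneg (fun u => a0 v u)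
    linarith
  refine hTle.trans (Real.le_sqrt_of_sq_le ?_)
  have cs : T ^ 2 ≤ #U * ∑ v ∈ U, (∑ u ∈ U, a v u) ^ 2 := sq_sum_le_card_mul_sum_sq
  refine cs.trans (mul_le_mul_of_nonneg_left ?_ (by positivity))
  have f1 : ∑ v ∈ U, (∑ u ∈ U, a v u) ^ 2 = ∑ u ∈ U, ∑ w ∈ U, ∑ v ∈ U, a v u * a v w := by
    simp_rw [sq, Finset.sum_mul_sum]
    rw [Finset.sum_comm]
    refine Finset.sum_congr rfl fun u _ => ?_
    rw [Finset.sum_comm]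
  have f2 : ∀ u ∈ U, ∑ w ∈ U, ∑ v ∈ U, a v u * a v w
      = ∑ w ∈ U.erase u, (a u w + ∑ v ∈ U, a v u * a v w) := by
    intro u hu
    rw [← Finset.add_sum_erase U _ hu, Finset.sum_add_distrib]
    congr 1
    have g1 : ∑ v ∈ U, a v u * a v u = ∑ v ∈ U, a u v :=
      Finset.sum_congr rfl fun v _ => by rw [asymm v u]; simp only [a]; split_ifs <;> norm_num
    rw [g1, ← Finset.add_sum_erase U _ hu]
    simp [a]
  have f3 : ∀ u ∈ U, ∀ w ∈ U.erase u, a u w + ∑ v ∈ U, a v u * a v w ≤ 1 := by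
    intro u hu w hw
    have hne : u ≠ w := (Finset.ne_of_mem_erase hw).symm
    by_cases hadj : G.Adj u w
    · rw [Finset.sum_eq_zero]
      · simp [a, hadj]
      · intro v _
        simp only [a]
        by_cases q1 : G.Adj v u <;> by_cases q2 : G.Adj v w <;> simp [q1, q2]
        exact h3 v u w q1 hadj q2.symm
    · have : ∑ v ∈ U, a v u * a v w = #{v ∈ U | G.Adj v u ∧ G.Adj v w} := by
        rw [Finset.card_filter]; push_cast
        refine Finset.sum_congr rfl fun v _ => ?_
        simp only [a]
        by_cases q1 : G.Adj v u <;> by_cases q2 : G.Adj v w <;> simp [q1, q2]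
      rw [this]
      have : #{v ∈ U | G.Adj v u ∧ G.Adj v w} ≤ 1 := by
        rw [Finset.card_le_one]
        intro v hv x hx
        simp only [Finset.mem_filter] at hv hx
        by_contra hvx
        exact h4 u v w x hne hvx hv.2.1.symm hv.2.2 hx.2.2.symm hx.2.1
      have : (#{v ∈ U | G.Adj v u ∧ G.Adj v w} : ℝ) ≤ 1 := by exact_mod_cast this
      simpa [a, hadj] using this
  rw [f1, Finset.sum_congr rfl f2]
  calc _ ≤ ∑ u ∈ U, ∑ w ∈ U.erase u, (1 : ℝ) :=
        Finset.sum_le_sum fun u hu => Finset.sum_le_sum fun w hw => f3 u hu w hw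
    _ = ∑ u ∈ U, ((#U : ℝ) - 1) := by
      refine Finset.sum_congr rfl fun u hu => ?_
      have := Finset.card_erase_add_one hu
      have : (#(U.erase u) : ℝ) + 1 = #U := by exact_mod_cast this
      simp; linarith
    _ = _ := by rw [Finset.sum_const, nsmul_eq_mul]

lemma lapFacts {n : ℕ} (G : SimpleGraph (Fin n)) [DecidableRel G.Adj] :
    ∃ y : Fin n → Fin n → ℝ, (∀ j, ∑ v, y j v ^ 2 = 1) ∧
      (∀ v, ∑ j, lapEigs G j * y j v ^ 2 = G.degree v) ∧ (∀ j, 0 ≤ lapEigs G j) ∧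
      (∀ j, lapEigs G j * ∑ v, y j v ^ 2 / G.degree v ≤ 2) := by
  have hA := (SimpleGraph.posSemidef_lapMatrix ℝ G).isHermitian
  have hnn : ∀ j, 0 ≤ lapEigs G j := (SimpleGraph.posSemidef_lapMatrix ℝ G).eigenvalues_nonneg
  have hunit : ∀ j, ∑ v, (hA.eigenvectorBasis j v) ^ 2 = 1 := by
    intro j
    have := hA.eigenvectorBasis.orthonormal.1 j
    have h2 := EuclideanSpace.real_norm_sq_eq (hA.eigenvectorBasis j)
    rw [this] at h2; simpa using h2.symm
  refine ⟨fun j v => hA.eigenvectorBasis j v, hunit, ?_, hnn, ?_⟩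
  · intro v
    have h := congrFun (congrFun hA.spectral_theorem v) v
    simp [SimpleGraph.lapMatrix, SimpleGraph.degMatrix, Unitary.conjStarAlgAut_apply,
      Matrix.mul_apply, Matrix.diagonal_apply] at h
    rw [h]
    refine Finset.sum_congr rfl fun j _ => ?_
    rw [mul_right_comm, ← sq, mul_comm]; rfl
  · intro j
    set x : Fin n → ℝ := fun v => hA.eigenvectorBasis j v with hx
    set l := lapEigs G j with hl
    have hev : (G.lapMatrix ℝ).mulVec x = l • x := hA.mulVec_eigenvectorBasis j
    have hq : (∑ v, ∑ u, if G.Adj v u then (x v - x u) ^ 2 else 0) / 2 = l := by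
      rw [← SimpleGraph.lapMatrix_toLinearMap₂', Matrix.toLinearMap₂'_apply', hev]
      rw [dotProduct_smul]
      have : dotProduct x x = 1 := by rw [← hunit j]; simp [dotProduct, hx, sq]
      simp [this]
    have hpt : ∀ v, l ^ 2 * (x v ^ 2 / G.degree v)
        ≤ ∑ u, if G.Adj v u then (x v - x u) ^ 2 else 0 := by
      intro v
      have h1 : l * x v = ∑ u ∈ G.neighborFinset v, (x v - x u) := by
        have := congrFun hev v
        rw [SimpleGraph.lapMatrix_mulVec_apply] at this
        simp at this
        rw [← this]; simp
      have h2 : (∑ u, if G.Adj v u then (x v - x u) ^ 2 else 0)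
          = ∑ u ∈ G.neighborFinset v, (x v - x u) ^ 2 := by
        rw [SimpleGraph.neighborFinset_eq_filter, Finset.sum_filter]
      rw [h2, ← mul_div_assoc, ← mul_pow, h1]
      apply div_le_of_le_mul₀ (by positivity) (Finset.sum_nonneg fun _ _ => sq_nonneg _)
      have := sq_sum_le_card_mul_sum_sq (s := G.neighborFinset v) (f := fun u => x v - x u)
      rw [SimpleGraph.card_neighborFinset_eq_degree] at this
      linarith
    have hsum := Finset.sum_le_sum (s := Finset.univ) fun v _ => hpt v
    rw [← Finset.mul_sum] at hsum
    rcases (hnn j).eq_or_lt with h0 | h0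
    · rw [← hl] at h0; rw [← h0]; simp
    · rw [← hl] at h0
      have : l * (l * ∑ v, x v ^ 2 / G.degree v) ≤ l * 2 := by linarith
      exact le_of_mul_le_mul_left this h0

/-- for `k ≥ 1` and a graph `G` of girth at least 5 (every cycle has length
at least 5) with at least `k` vertices, `∑_{i=1}^k λ_i(L(G)) ≤ |E| + ⌊k√(2k − 1)⌋`. -/
theorem sum_lapEigs_le_of_girth_ge_five {n : ℕ} (G : SimpleGraph (Fin n)) [DecidableRel G.Adj]
    (hG : ∀ (v : Fin n) (c : G.Walk v v), c.IsCycle → 5 ≤ c.length)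
    (k : ℕ) (hk1 : 1 ≤ k) (hk2 : k ≤ n) :
    ∑ i ∈ Finset.Icc 1 k, ithLargest (lapEigs G) i ≤
      (G.edgeFinset.card : ℝ) + (⌊(k : ℝ) * Real.sqrt (2 * (k : ℝ) - 1)⌋ : ℝ) := by
  obtain ⟨S, hS, hsum⟩ := exS (lapEigs G) k hk2
  obtain ⟨y, hy1, hy2, hnn, hy3⟩ := lapFacts G
  rw [hsum]
  let b : Fin n → ℝ := fun v => ∑ j ∈ S, lapEigs G j * y j v ^ 2
  have hb0 : ∀ v, 0 ≤ b v := fun v => Finset.sum_nonneg fun j _ => mul_nonneg (hnn j) (sq_nonneg _)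
  have hb1 : ∀ v, b v ≤ G.degree v := fun v => by
    rw [← hy2 v]
    exact Finset.sum_le_univ_sum_of_nonneg fun j => mul_nonneg (hnn j) (sq_nonneg _)
  obtain ⟨U, hU, hle⟩ := knap (fun v => (G.degree v : ℝ)) (fun v => b v / G.degree v) (2 * k)
    (fun v => by positivity) (fun v => div_nonneg (hb0 v) (by positivity))
    (fun v => div_le_one_of_le₀ (hb1 v) (by positivity)) (by
      have : ∑ v, b v / G.degree v = ∑ j ∈ S, lapEigs G j * ∑ v, y j v ^ 2 / G.degree v := by
        simp only [b, Finset.sum_div, Finset.mul_sum]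
        rw [Finset.sum_comm]
        simp only [mul_div_assoc]
      rw [this]
      calc _ ≤ ∑ j ∈ S, (2 : ℝ) := Finset.sum_le_sum fun j _ => hy3 j
        _ = #S * 2 := by simp
        _ ≤ _ := by
          have : (#S : ℝ) ≤ k := by exact_mod_cast hS
          push_cast; linarith)
  have e1 : ∑ j ∈ S, lapEigs G j = ∑ v, (G.degree v : ℝ) * (b v / G.degree v) := by
    have : ∀ v, (G.degree v : ℝ) * (b v / G.degree v) = b v := by
      intro v
      by_cases h : (G.degree v : ℝ) = 0
      · have := hb1 v; have := hb0 v; rw [h]; simp; linarith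
      · field_simp
    simp_rw [this, b]
    rw [Finset.sum_comm]
    simp_rw [← Finset.mul_sum, hy1, mul_one]
  rw [e1]
  refine hle.trans ?_
  have hc := comb G hG U
  have hk : (1 : ℝ) ≤ k := by exact_mod_cast hk1
  have hs : √((#U : ℝ) * (#U * (#U - 1))) ≤ 2 * (k * √(2 * (k : ℝ) - 1)) := by
    have hUr : (#U : ℝ) ≤ 2 * k := by exact_mod_cast hU
    rw [Real.sqrt_le_left (by positivity)]
    have : (2 * ((k : ℝ) * √(2 * (k : ℝ) - 1))) ^ 2 = (2 * k) ^ 2 * (2 * k - 1) := by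
      rw [mul_pow, mul_pow, Real.sq_sqrt (by linarith)]; ring
    rw [this]
    have hU0 : (0 : ℝ) ≤ #U := by positivity
    have : (#U : ℝ) ^ 2 ≤ (2 * k) ^ 2 := by gcongr
    nlinarith [sq_nonneg (#U : ℝ)]
  have hm : ((∑ v ∈ U, (G.degree v : ℤ) - G.edgeFinset.card : ℤ) : ℝ)
      ≤ k * √(2 * (k : ℝ) - 1) := by
    push_cast; linarith
  have := Int.le_floor.mpr hm
  have : ((∑ v ∈ U, (G.degree v : ℤ) - G.edgeFinset.card : ℤ) : ℝ)
    ≤ (⌊(k : ℝ) * √(2 * (k : ℝ) - 1)⌋ : ℝ) := by exact_mod_cast this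
  push_cast at this
  linarith
end

section
/- Let k ≥ 1, let t ≥ 1, and let G = (V,E) be a finite simple graph with |V| ≥ k that contains no path of length t (i.e., no path with t edges). Then ∑_{i=1}^{k} λ_i(L(G)) ≤ |E| + k(t − 1). -/
open Finset

lemma aux_sum_ith {n : ℕ} (f : Fin n → ℝ) (k : ℕ) (hk : k ≤ n) :
    ∃ I : Finset (Fin n), I.card = k ∧
      ∑ i ∈ Finset.Icc 1 k, ithLargest f i = ∑ i ∈ I, f i := by
  have hinj : Function.Injective
      (fun j : Fin k => Tuple.sort f (Fin.rev (Fin.castLE hk j))) := by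
    intro a b hab
    simpa using hab
  refine ⟨Finset.univ.map ⟨_, hinj⟩, by simp, ?_⟩
  rw [Finset.sum_map]
  have h1 : ∑ i ∈ Finset.Icc 1 k, ithLargest f i
      = ∑ i ∈ Finset.range k, ithLargest f (i + 1) := by
    rw [Finset.range_eq_Ico, Finset.sum_Ico_add' (fun i => ithLargest f i) 0 k 1]
    rfl
  rw [h1, ← Fin.sum_univ_eq_sum_range (fun i => ithLargest f (i + 1)) k]
  refine Finset.sum_congr rfl fun j _ => ?_
  have hj := j.2
  unfold ithLargest
  rw [dif_pos ⟨by omega, by omega⟩]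
  rfl

lemma aux_orient {n : ℕ} (G : SimpleGraph (Fin n)) [DecidableRel G.Adj] (t : ℕ)
    (hG : ∀ (u v : Fin n) (p : G.Walk u v), p.IsPath → p.length ≠ t)
    (S : Finset (Fin n)) :
    ∃ out : Fin n → Finset (Fin n),
      (∀ v ∈ S, ∀ u ∈ out v, u ∈ S ∧ G.Adj v u) ∧
      (∀ v ∈ S, ∀ u ∈ S, G.Adj v u → (u ∈ out v ↔ v ∉ out u)) ∧
      (∀ v ∈ S, (out v).card + 1 ≤ t) ∧
      (∀ v ∈ S, (∃ w, G.Adj v w ∧ w ∉ out v) → (out v).card + 2 ≤ t) := by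
  classical
  have hlt : ∀ (u v : Fin n) (p : G.Walk u v), p.IsPath → p.length < t := by
    intro u v p hp
    by_contra hcon
    push Not at hcon
    refine hG _ _ (p.take t) (hp.take t) ?_
    rw [SimpleGraph.Walk.take_length]
    omega
  induction S using Finset.strongInduction with
  | H S ih =>
  rcases S.eq_empty_or_nonempty with rfl | ⟨x, hx⟩
  · exact ⟨fun _ => ∅, by simp, by simp, by simp, by simp⟩
  -- a longest path inside S
  let Q : ℕ → Prop := fun l => ∃ (u v : Fin n) (p : G.Walk u v), p.IsPath ∧
    (∀ y ∈ p.support, y ∈ S) ∧ p.length = l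
  have hQ0 : Q 0 := ⟨x, x, .nil, by simp, by simpa using hx, rfl⟩
  have hQb : ∀ l, Q l → l ≤ t := by
    rintro l ⟨u, v, p, hp, -, rfl⟩
    exact (hlt _ _ p hp).le
  have hQm : Q (Nat.findGreatest Q t) := Nat.findGreatest_spec (Nat.zero_le _) hQ0
  have hmax : ∀ l, Q l → l ≤ Nat.findGreatest Q t := fun l hl =>
    Nat.le_findGreatest (hQb l hl) hl
  generalize Nat.findGreatest Q t = m at hQm hmax
  obtain ⟨v, z, p, hp, hpS, rfl⟩ := hQm
  have hvS : v ∈ S := hpS v p.start_mem_support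
  obtain ⟨out, h1, h2, h3, h4⟩ := ih (S.erase v) (Finset.erase_ssubset hvS)
  let N : Finset (Fin n) := S.filter (fun u => G.Adj v u)
  have hN : N ⊆ p.support.toFinset.erase v := by
    intro u hu
    simp only [N, Finset.mem_filter] at hu
    rw [Finset.mem_erase, List.mem_toFinset]
    refine ⟨hu.2.ne', ?_⟩
    by_contra hus
    have := hmax (p.length + 1) ⟨u, z, .cons hu.2.symm p, hp.cons hus, by
      intro y hy
      rw [SimpleGraph.Walk.support_cons, List.mem_cons] at hy
      rcases hy with rfl | hy
      · exact hu.1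
      · exact hpS y hy, by simp⟩
    omega
  have hNc : N.card ≤ p.length := by
    refine (Finset.card_le_card hN).trans ?_
    rw [Finset.card_erase_of_mem (by simp), List.toFinset_card_of_nodup hp.support_nodup]
    simp
  have hpl := hlt _ _ p hp
  have hvout : ∀ u ∈ S, u ≠ v → v ∉ out u := fun u hu huv hv =>
    (Finset.mem_erase.1 (h1 u (Finset.mem_erase.2 ⟨huv, hu⟩) v hv).1).1 rfl
  refine ⟨Function.update out v N, ?_, ?_, ?_, ?_⟩
  · intro a ha u hu
    by_cases hav : a = v
    · subst hav
      simpa [N] using hu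
    · rw [Function.update_of_ne hav] at hu
      have := h1 a (Finset.mem_erase.2 ⟨hav, ha⟩) u hu
      exact ⟨Finset.mem_of_mem_erase this.1, this.2⟩
  · intro a ha u hu hau
    by_cases hav : a = v
    · subst hav
      rw [Function.update_self, Function.update_of_ne hau.ne']
      exact ⟨fun _ => hvout u hu hau.ne', fun _ => by simp [N, hu, hau]⟩
    · by_cases huv : u = v
      · subst huv
        rw [Function.update_self, Function.update_of_ne hav]
        exact ⟨fun h => absurd h (hvout a ha hav), fun h => absurd (by simp [N, ha, hau.symm]) h⟩
      · rw [Function.update_of_ne hav, Function.update_of_ne huv]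
        exact h2 a (Finset.mem_erase.2 ⟨hav, ha⟩) u (Finset.mem_erase.2 ⟨huv, hu⟩) hau
  · intro a ha
    by_cases hav : a = v
    · subst hav
      rw [Function.update_self]
      omega
    · rw [Function.update_of_ne hav]
      exact h3 a (Finset.mem_erase.2 ⟨hav, ha⟩)
  · intro a ha
    by_cases hav : a = v
    · subst hav
      rw [Function.update_self]
      rintro ⟨w, haw, hw⟩
      have hwS : w ∉ S := fun h => hw (by simp [N, h, haw])
      have := hlt _ _ (SimpleGraph.Walk.cons haw.symm p) (hp.cons fun h => hwS (hpS w h))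
      simp only [SimpleGraph.Walk.length_cons] at this
      omega
    · rw [Function.update_of_ne hav]
      exact h4 a (Finset.mem_erase.2 ⟨hav, ha⟩)

lemma aux_vertex {n : ℕ} (P : Fin n → Fin n → ℝ)
    (hproj : ∀ u, ∑ v, P u v ^ 2 = P u u) (u : Fin n) (A : Finset (Fin n)) (hu : u ∉ A) :
    ∑ v ∈ A, (P u u - 2 * P u v - 1) ≤ P u u := by
  have hs : P u u ^ 2 + ∑ v ∈ A, P u v ^ 2 ≤ P u u := by
    rw [← Finset.sum_insert (f := fun v => P u v ^ 2) hu]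
    conv_rhs => rw [← hproj u]
    exact Finset.sum_le_sum_of_subset_of_nonneg (Finset.subset_univ _)
      (fun _ _ _ => sq_nonneg _)
  have hc : (∑ v ∈ A, P u v) ^ 2 ≤ A.card * ∑ v ∈ A, P u v ^ 2 := sq_sum_le_card_mul_sum_sq
  have hs0 : 0 ≤ ∑ v ∈ A, P u v ^ 2 := Finset.sum_nonneg fun _ _ => sq_nonneg _
  have hd : (0 : ℝ) ≤ A.card := Nat.cast_nonneg _
  simp only [Finset.sum_sub_distrib, ← Finset.mul_sum, Finset.sum_const, nsmul_eq_mul]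
  generalize (A.card : ℝ) = d at *
  generalize ∑ v ∈ A, P u v ^ 2 = s at *
  generalize ∑ v ∈ A, P u v = r at *
  generalize P u u = p at *
  have hp : 0 ≤ p := by nlinarith [sq_nonneg p]
  rcases hp.eq_or_lt with rfl | hp
  · have : s = 0 := by nlinarith
    subst this
    have : r = 0 := by nlinarith
    subst this
    linarith
  · by_contra hcon
    push Not at hcon
    have h1 := mul_pos hp (sub_pos.2 hcon)
    have h2 := mul_le_mul_of_nonneg_left hs hd
    nlinarith [sq_nonneg (r + p)]

lemma aux_core {n : ℕ} (G : SimpleGraph (Fin n)) [DecidableRel G.Adj] (t : ℕ)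
    (hG : ∀ (u v : Fin n) (p : G.Walk u v), p.IsPath → p.length ≠ t)
    (P : Fin n → Fin n → ℝ) (hsymm : ∀ u v, P u v = P v u)
    (hproj : ∀ u, ∑ v, P u v ^ 2 = P u u) :
    (∑ u, ∑ v, if G.Adj u v then (P u u + P v v - 2 * P u v - 1) else 0)
      ≤ 2 * (((t : ℝ) - 1) * ∑ u, P u u) := by
  classical
  obtain ⟨out, h1, h2, h3, h4⟩ := aux_orient G t hG Finset.univ
  simp only [Finset.mem_univ, true_and, forall_const] at h1 h2 h3 h4
  have hnn : ∀ u, 0 ≤ P u u := fun u => by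
    rw [← hproj u]; exact Finset.sum_nonneg fun _ _ => sq_nonneg _
  let f : Fin n → Fin n → ℝ := fun u v => if v ∈ out u then P u u + P v v - 2 * P u v - 1 else 0
  have e1 : (∑ u, ∑ v, if G.Adj u v then (P u u + P v v - 2 * P u v - 1) else 0)
      = ∑ u, ∑ v, (f u v + f v u) := by
    refine Finset.sum_congr rfl fun u _ => Finset.sum_congr rfl fun v _ => ?_
    simp only [f]
    by_cases ha : G.Adj u v
    · have := h2 u v ha
      by_cases hv : v ∈ out u
      · simp [ha, hv, this.1 hv]
      · have hu : u ∈ out v := by tauto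
        simp only [ha, hv, hu, if_true, if_false, hsymm v u]
        ring
    · have a1 : v ∉ out u := fun h => ha (h1 _ _ h)
      have a2 : u ∉ out v := fun h => ha (h1 _ _ h).symm
      simp [ha, a1, a2]
  have e2 : ∑ u, ∑ v, (f u v + f v u) = 2 * ∑ u, ∑ v, f u v := by
    simp only [Finset.sum_add_distrib]
    rw [Finset.sum_comm (f := fun u v => f v u)]
    ring
  have e3 : ∑ u, ∑ v, f u v = ∑ u, (((out u).card : ℝ) * P u u +
      ∑ v ∈ Finset.univ.filter (fun v => u ∈ out v), (P u u - 2 * P u v - 1)) := by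
    have : ∀ u v, f u v = (if v ∈ out u then P u u else 0) +
        (if v ∈ out u then P v v - 2 * P v u - 1 else 0) := by
      intro u v
      simp only [f]
      split_ifs
      · rw [hsymm u v]; ring
      · simp
    simp only [this, Finset.sum_add_distrib]
    congr 1
    · refine Finset.sum_congr rfl fun u _ => ?_
      simp
    · rw [Finset.sum_comm]
      refine Finset.sum_congr rfl fun u _ => ?_
      rw [Finset.sum_filter]
  rw [e1, e2, e3, Finset.mul_sum (a := (t : ℝ) - 1)]
  refine mul_le_mul_of_nonneg_left (Finset.sum_le_sum fun u _ => ?_) (by norm_num)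
  rcases (Finset.univ.filter (fun v => u ∈ out v)).eq_empty_or_nonempty with he | ⟨w, hw⟩
  · rw [he, Finset.sum_empty, add_zero]
    have : ((out u).card : ℝ) + 1 ≤ t := by exact_mod_cast h3 u
    exact mul_le_mul_of_nonneg_right (by linarith) (hnn u)
  · have hw' : u ∈ out w := by simpa using hw
    have ha := h1 _ _ hw'
    have h4' := h4 u ⟨w, ha.symm, (h2 w u ha).1 hw'⟩
    have : ((out u).card : ℝ) + 2 ≤ t := by exact_mod_cast h4'
    have hv := aux_vertex P hproj u (Finset.univ.filter (fun v => u ∈ out v)) (by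
      intro h
      have h' : u ∈ out u := by simpa using h
      exact G.loopless.irrefl u (h1 _ _ h'))
    have := mul_le_mul_of_nonneg_right this (hnn u)
    linarith

/-- for `k ≥ 1`, `t ≥ 1`, and a graph `G` with at least `k` vertices
containing no path with `t` edges, `∑_{i=1}^k λ_i(L(G)) ≤ |E| + k(t − 1)`. -/
theorem sum_lapEigs_le_of_no_path {n : ℕ} (G : SimpleGraph (Fin n)) [DecidableRel G.Adj]
    (t : ℕ) (ht : 1 ≤ t)
    (hG : ∀ (u v : Fin n) (p : G.Walk u v), p.IsPath → p.length ≠ t)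
    (k : ℕ) (hk1 : 1 ≤ k) (hk2 : k ≤ n) :
    ∑ i ∈ Finset.Icc 1 k, ithLargest (lapEigs G) i ≤
      (G.edgeFinset.card : ℝ) + (k : ℝ) * ((t : ℝ) - 1) := by
  classical
  obtain ⟨I, hI, hsum⟩ := aux_sum_ith (lapEigs G) k hk2
  rw [hsum]
  set hH := (SimpleGraph.posSemidef_lapMatrix ℝ G).isHermitian with hHdef
  let b : Fin n → Fin n → ℝ := fun i u => hH.eigenvectorBasis i u
  have horth : ∀ i j, ∑ u, b i u * b j u = if i = j then 1 else 0 := by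
    intro i j
    have := orthonormal_iff_ite.1 hH.eigenvectorBasis.orthonormal i j
    rw [← this, PiLp.inner_apply]
    refine Finset.sum_congr rfl fun u _ => ?_
    simp [b, mul_comm]
  have heig : ∀ i, lapEigs G i = (∑ u, ∑ v, if G.Adj u v then (b i u - b i v) ^ 2 else 0) / 2 := by
    intro i
    rw [← SimpleGraph.lapMatrix_toLinearMap₂' ℝ G (b i), Matrix.toLinearMap₂'_apply']
    have hm : (G.lapMatrix ℝ).mulVec (b i) = lapEigs G i • b i := hH.mulVec_eigenvectorBasis i
    rw [hm, dotProduct_smul]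
    have := horth i i
    simp only [if_true] at this
    simp [dotProduct, this]
  let P : Fin n → Fin n → ℝ := fun u v => ∑ i ∈ I, b i u * b i v
  have hsymm : ∀ u v, P u v = P v u := fun u v =>
    Finset.sum_congr rfl fun i _ => mul_comm _ _
  have hproj : ∀ u, ∑ v, P u v ^ 2 = P u u := by
    intro u
    simp only [P, sq, Finset.sum_mul_sum]
    rw [Finset.sum_comm]
    refine Finset.sum_congr rfl fun i hi => ?_
    rw [Finset.sum_comm]
    have : ∀ j ∈ I, ∑ v, b i u * b i v * (b j u * b j v)
        = if i = j then b i u * b j u else 0 := by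
      intro j _
      have h := horth i j
      calc ∑ v, b i u * b i v * (b j u * b j v)
          = (b i u * b j u) * ∑ v, b i v * b j v := by
            rw [Finset.mul_sum]
            exact Finset.sum_congr rfl fun v _ => by ring
        _ = _ := by rw [h]; split_ifs <;> simp
    rw [Finset.sum_congr rfl this]
    simp [hi]
  have htr : ∑ u, P u u = k := by
    simp only [P]
    rw [Finset.sum_comm]
    simp [horth, hI]
  have hcore := aux_core G t hG P hsymm hproj
  rw [htr] at hcore
  have hE : (∑ u, ∑ v, if G.Adj u v then (1 : ℝ) else 0) = 2 * (G.edgeFinset.card : ℝ) := by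
    have h := G.sum_degrees_eq_twice_card_edges
    have h' : (∑ u, (G.degree u : ℝ)) = 2 * (G.edgeFinset.card : ℝ) := by exact_mod_cast h
    rw [← h']
    refine Finset.sum_congr rfl fun u _ => ?_
    rw [Finset.sum_boole, ← SimpleGraph.card_neighborFinset_eq_degree,
      SimpleGraph.neighborFinset_eq_filter]
  have hL : ∑ i ∈ I, lapEigs G i =
      (∑ u, ∑ v, if G.Adj u v then (P u u + P v v - 2 * P u v) else 0) / 2 := by
    simp only [heig]
    rw [← Finset.sum_div, Finset.sum_comm]
    congr 1
    refine Finset.sum_congr rfl fun u _ => ?_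
    rw [Finset.sum_comm]
    refine Finset.sum_congr rfl fun v _ => ?_
    split_ifs
    · simp only [P, Finset.mul_sum, ← Finset.sum_add_distrib, ← Finset.sum_sub_distrib]
      exact Finset.sum_congr rfl fun i _ => by ring
    · simp
  have hsplit : (∑ u, ∑ v, if G.Adj u v then (P u u + P v v - 2 * P u v - 1) else 0)
      = (∑ u, ∑ v, if G.Adj u v then (P u u + P v v - 2 * P u v) else 0)
        - ∑ u, ∑ v, if G.Adj u v then (1 : ℝ) else 0 := by
    simp only [← Finset.sum_sub_distrib]
    refine Finset.sum_congr rfl fun u _ => Finset.sum_congr rfl fun v _ => ?_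
    split_ifs <;> simp
  rw [hL]
  rw [hsplit, hE] at hcore
  linarith
end

section
/- Let V be a finite linearly ordered set. For finite subsets σ ⊂ τ of V with |τ \ σ| = 1, define (τ : σ) = (−1)^{|{v ∈ τ : v < u}|}, where u is the unique element of τ \ σ. Let τ and η be finite subsets of V with |τ| = |η| and |τ ∩ η| = |τ| − 1. Then (τ∪η : τ)·(τ∪η : η) = −(τ : τ∩η)·(η : τ∩η). -/
/-- For finite subsets `σ ⊂ τ` of a linearly ordered type with `|τ \ σ| = 1`, the incidence
sign `(τ : σ) = (−1)^{|{v ∈ τ : v < u}|}`, where `u` is the unique element of `τ \ σ`.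
(When `τ \ σ` is a singleton `{u}`, the condition `∃ u' ∈ τ \ σ, v < u'` used below is
equivalent to `v < u`, so this agrees with the usual definition.) -/
def incSign {V : Type*} [LinearOrder V] (τ σ : Finset V) : ℤ :=
  (-1) ^ (τ.filter (fun v => ∃ u ∈ τ \ σ, v < u)).card

theorem incSign_insert_aux {V : Type*} [LinearOrder V] (σ : Finset V) (u : V) (hu : u ∉ σ) :
    incSign (insert u σ) σ = (-1) ^ (σ.filter (fun v => v < u)).card := by
  unfold incSign
  have h : (insert u σ).filter (fun v => ∃ w ∈ insert u σ \ σ, v < w)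
      = σ.filter (fun v => v < u) := by
    ext v
    simp only [Finset.mem_filter, Finset.mem_insert, Finset.mem_sdiff]
    constructor
    · rintro ⟨hv, w, ⟨hw, hw'⟩, hlt⟩
      have hwu : w = u := hw.resolve_right hw'
      subst hwu
      exact ⟨hv.resolve_left hlt.ne, hlt⟩
    · rintro ⟨hv, hlt⟩
      exact ⟨Or.inr hv, u, ⟨Or.inl rfl, hu⟩, hlt⟩
  rw [h]

/-- if `τ, η` are finite subsets of a linearly ordered set with `|τ| = |η|`
and `|τ ∩ η| = |τ| − 1`, then `(τ∪η : τ)·(τ∪η : η) = −(τ : τ∩η)·(η : τ∩η)`. -/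
theorem incSign_union_mul_eq_neg {V : Type*} [LinearOrder V] (τ η : Finset V)
    (hcard : τ.card = η.card) (hint : (τ ∩ η).card + 1 = τ.card) :
    incSign (τ ∪ η) τ * incSign (τ ∪ η) η =
      -(incSign τ (τ ∩ η) * incSign η (τ ∩ η)) := by
  have h1 : (τ \ η).card = 1 := by
    have := Finset.card_sdiff_add_card_inter τ η
    omega
  have h2 : (η \ τ).card = 1 := by
    have := Finset.card_sdiff_add_card_inter η τ
    rw [Finset.inter_comm] at this
    omega
  obtain ⟨a, ha⟩ := Finset.card_eq_one.1 h1
  obtain ⟨b, hb⟩ := Finset.card_eq_one.1 h2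
  have ha' : ∀ x, (x ∈ τ ∧ x ∉ η) ↔ x = a := fun x => by
    rw [← Finset.mem_sdiff, ha, Finset.mem_singleton]
  have hb' : ∀ x, (x ∈ η ∧ x ∉ τ) ↔ x = b := fun x => by
    rw [← Finset.mem_sdiff, hb, Finset.mem_singleton]
  obtain ⟨haτ, haη⟩ := (ha' a).2 rfl
  obtain ⟨hbη, hbτ⟩ := (hb' b).2 rfl
  have hab : a ≠ b := fun h => hbτ (h ▸ haτ)
  generalize hρ : τ ∩ η = ρ
  have haρ : a ∉ ρ := by rw [← hρ]; simp [haη]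
  have hbρ : b ∉ ρ := by rw [← hρ]; simp [hbτ]
  have e1 : τ = insert a ρ := by
    ext x
    rw [← hρ, Finset.mem_insert, Finset.mem_inter, ← ha' x]
    tauto
  have e2 : η = insert b ρ := by
    ext x
    rw [← hρ, Finset.mem_insert, Finset.mem_inter, ← hb' x]
    tauto
  have e3 : τ ∪ η = insert b τ := by
    ext x
    rw [Finset.mem_union, Finset.mem_insert, ← hb' x]
    tauto
  have e4 : τ ∪ η = insert a η := by
    ext x
    rw [Finset.mem_union, Finset.mem_insert, ← ha' x]
    tauto
  have s1 : incSign (τ ∪ η) τ = (-1) ^ (τ.filter (fun v => v < b)).card := by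
    rw [e3, incSign_insert_aux τ b hbτ]
  have s2 : incSign (τ ∪ η) η = (-1) ^ (η.filter (fun v => v < a)).card := by
    rw [e4, incSign_insert_aux η a haη]
  rw [s1, s2, e1, e2, incSign_insert_aux ρ a haρ, incSign_insert_aux ρ b hbρ,
    Finset.filter_insert, Finset.filter_insert]
  rcases lt_or_gt_of_ne hab with h | h
  · rw [if_pos h, if_neg h.not_gt, Finset.card_insert_of_notMem (by simp [haρ])]
    ring
  · rw [if_neg h.not_gt, if_pos h, Finset.card_insert_of_notMem (by simp [hbρ])]
    ring
end

section
/- For every integer k_0 ≥ 1 and every real ε > 0, there exists n_0 = n_0(k_0, ε) such that for all n ≥ n_0 and all integers k with 1 ≤ k ≤ k_0, the path graph P_n on n vertices satisfies ∑_{i=1}^{2k} d_i(P_n) − ∑_{i=1}^{k} λ_i(L(P_n)) < ε. -/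
open Finset

/-- Adjacency in the path graph is decidable. -/
instance pathGraphAdjDecidable (n : ℕ) : DecidableRel (SimpleGraph.pathGraph n).Adj :=
  fun u v => decidable_of_iff ((u : ℕ) + 1 = v ∨ (v : ℕ) + 1 = u)
    SimpleGraph.pathGraph_adj.symm

lemma ithLargest_le_two {n : ℕ} (f : Fin n → ℝ) (i : ℕ) (h : ∀ x, f x ≤ 2) :
    ithLargest f i ≤ 2 := by
  unfold ithLargest
  split_ifs
  · exact h _
  · norm_num

lemma le_ithLargest {n : ℕ} (f : Fin n → ℝ) (i : ℕ) (hi : 1 ≤ i) (c : ℝ)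
    (S : Finset (Fin n)) (hS : i ≤ S.card) (h : ∀ x ∈ S, c ≤ f x) :
    c ≤ ithLargest f i := by
  have hn : i ≤ n := hS.trans (by simpa using S.card_le_univ)
  unfold ithLargest
  rw [dif_pos ⟨hi, hn⟩]
  by_contra hlt
  push Not at hlt
  set r : Fin n := Fin.rev ⟨i - 1, by omega⟩ with hr
  have hsub : S.image (Tuple.sort f).symm ⊆ Finset.Ioi r := by
    intro y hy
    rw [Finset.mem_image] at hy
    obtain ⟨x, hx, rfl⟩ := hy
    rw [Finset.mem_Ioi]
    by_contra hle
    push Not at hle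
    have := Tuple.monotone_sort f hle
    simp only [Function.comp_apply, Equiv.apply_symm_apply] at this
    linarith [h x hx]
  have hc := Finset.card_le_card hsub
  rw [Finset.card_image_of_injective _ (Tuple.sort f).symm.injective, Fin.card_Ioi] at hc
  have : (r : ℕ) = n - i := by
    rw [hr, Fin.val_rev]; simp only; omega
  omega

lemma sum_path_nbr {n : ℕ} (v : Fin n) (g : ℕ → ℝ) :
    ∑ u ∈ (SimpleGraph.pathGraph n).neighborFinset v, g u =
      (if (v : ℕ) + 1 < n then g (v + 1) else 0) + (if 0 < (v : ℕ) then g (v - 1) else 0) := by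
  have h1 : (SimpleGraph.pathGraph n).neighborFinset v =
      Finset.univ.filter (fun u : Fin n => (v : ℕ) + 1 = u ∨ (u : ℕ) + 1 = v) := by
    ext u
    simp [SimpleGraph.pathGraph_adj]
  rw [h1, Finset.sum_filter, Fin.sum_univ_eq_sum_range
    (fun u => if (v : ℕ) + 1 = u ∨ u + 1 = (v : ℕ) then g u else 0) n]
  have h2 : ∀ u ∈ Finset.range n, (if (v : ℕ) + 1 = u ∨ u + 1 = (v : ℕ) then g u else 0) =
      (if (v : ℕ) + 1 = u then g u else 0) +
      (if (v : ℕ) - 1 = u then (if 0 < (v : ℕ) then g u else 0) else 0) := by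
    intro u _
    split_ifs <;> first | omega | simp
  rw [Finset.sum_congr rfl h2, Finset.sum_add_distrib, Finset.sum_ite_eq, Finset.sum_ite_eq]
  have := v.2
  have h3 : (v : ℕ) - 1 < n := by omega
  simp [h3]

lemma path_deg {n : ℕ} (v : Fin n) :
    ((SimpleGraph.pathGraph n).degree v : ℝ) =
      (if (v : ℕ) + 1 < n then 1 else 0) + (if 0 < (v : ℕ) then 1 else 0) := by
  rw [← sum_path_nbr v (fun _ => 1)]
  simp

lemma path_eig {n m : ℕ} (hm : m < n) (hm0 : 1 ≤ m) :
    ∃ i, lapEigs (SimpleGraph.pathGraph n) i = 2 + 2 * Real.cos (Real.pi * m / n) := by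
  have hn : (0 : ℝ) < n := by exact_mod_cast (by omega : 0 < n)
  have hm0' : (0 : ℝ) < m := by exact_mod_cast hm0
  have hmn : (m : ℝ) < n := by exact_mod_cast hm
  set θ : ℝ := Real.pi - Real.pi * m / n with hθ
  set w : ℕ → ℝ := fun x => Real.cos (θ * (x + 1 / 2)) with hw
  have hmem : (2 + 2 * Real.cos (Real.pi * m / n)) ∈
      spectrum ℝ ((SimpleGraph.pathGraph n).lapMatrix ℝ) := by
    rw [← Matrix.spectrum_toLin', ← Module.End.hasEigenvalue_iff_mem_spectrum]
    apply Module.End.hasEigenvalue_of_hasEigenvector (x := fun x : Fin n => w x)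
    refine ⟨?_, ?_⟩
    · rw [Module.End.mem_eigenspace_iff, Matrix.toLin'_apply]
      ext v
      rw [SimpleGraph.lapMatrix_mulVec_apply, sum_path_nbr, path_deg]
      have hc : 2 + 2 * Real.cos (Real.pi * m / n) = 2 - 2 * Real.cos θ := by
        rw [hθ, Real.cos_pi_sub]; ring
      rw [hc]
      simp only [Pi.smul_apply, smul_eq_mul]
      have hA : Real.cos (θ * ((v : ℕ) + 1 / 2) + θ) + Real.cos (θ * ((v : ℕ) + 1 / 2) - θ)
          = 2 * Real.cos θ * Real.cos (θ * ((v : ℕ) + 1 / 2)) := by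
        rw [Real.cos_add _ θ, Real.cos_sub _ θ]; ring
      have e1 : (if (v : ℕ) + 1 < n then w (v + 1) else 0) =
          Real.cos (θ * ((v : ℕ) + 1 / 2) + θ) - (if (v : ℕ) + 1 < n then 0 else w v) := by
        split_ifs with h
        · simp only [hw]; push_cast; rw [sub_zero]; congr 1; ring
        · have h' : (v : ℕ) + 1 = n := by omega
          have hv : ((v : ℕ) : ℝ) = n - 1 := by
            have h2 : (((v : ℕ) + 1 : ℕ) : ℝ) = (n : ℝ) := by exact_mod_cast h'
            push_cast at h2; linarith
          have hθn : θ * n = (n - m : ℕ) * Real.pi := by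
            rw [hθ, Nat.cast_sub hm.le]; field_simp
          have a1 : θ * ((v : ℕ) + 1 / 2) + θ = θ * n + θ / 2 := by rw [hv]; ring
          have a2 : θ * ((v : ℕ) + 1 / 2) = θ * n - θ / 2 := by rw [hv]; ring
          simp only [hw]
          rw [a1, a2, hθn, Real.cos_add, Real.cos_sub, Real.sin_nat_mul_pi]; ring
      have e2 : (if 0 < (v : ℕ) then w (v - 1) else 0) =
          Real.cos (θ * ((v : ℕ) + 1 / 2) - θ) - (if 0 < (v : ℕ) then 0 else w v) := by
        split_ifs with h
        · simp only [hw]; rw [Nat.cast_sub h, sub_zero]; congr 1; push_cast; ring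
        · have h' : (v : ℕ) = 0 := by omega
          simp only [hw, h']
          rw [← Real.cos_neg]
          have : -(θ * (((0 : ℕ) : ℝ) + 1 / 2) - θ) = θ * (((0 : ℕ) : ℝ) + 1 / 2) := by
            push_cast; ring
          rw [this]; ring
      rw [e1, e2]
      have hwv : w v = Real.cos (θ * ((v : ℕ) + 1 / 2)) := rfl
      rw [← hwv] at hA
      split_ifs <;> linarith
    · intro h0
      have := congrFun h0 ⟨0, by omega⟩
      simp only [hw, Pi.zero_apply] at this
      have hq : Real.pi * m / n < Real.pi := by
        rw [div_lt_iff₀ hn]; exact mul_lt_mul_of_pos_left hmn Real.pi_pos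
      have hq0 : 0 < Real.pi * m / n := by have := Real.pi_pos; positivity
      have hp : 0 < Real.cos (θ * (((0 : ℕ) : ℝ) + 1 / 2)) := by
        apply Real.cos_pos_of_mem_Ioo
        constructor <;> push_cast <;> linarith
      exact hp.ne' this
  rw [Matrix.IsHermitian.spectrum_real_eq_range_eigenvalues
    (SimpleGraph.posSemidef_lapMatrix ℝ (SimpleGraph.pathGraph n)).isHermitian] at hmem
  exact hmem

lemma path_top {n k : ℕ} (hk : k < n) (i : ℕ) (hi : 1 ≤ i) (hik : i ≤ k) :
    2 + 2 * Real.cos (Real.pi * k / n) ≤ ithLargest (lapEigs (SimpleGraph.pathGraph n)) i := by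
  have hn : (0 : ℝ) < n := by exact_mod_cast (by omega : 0 < n)
  have hex : ∀ m : ℕ, ∃ j, m ∈ Finset.Icc 1 k →
      lapEigs (SimpleGraph.pathGraph n) j = 2 + 2 * Real.cos (Real.pi * m / n) := by
    intro m
    by_cases h : m ∈ Finset.Icc 1 k
    · rw [Finset.mem_Icc] at h
      obtain ⟨j, hj⟩ := path_eig (n := n) (m := m) (by omega) h.1
      exact ⟨j, fun _ => hj⟩
    · exact ⟨⟨0, by omega⟩, fun h' => absurd h' h⟩
  choose J hJ using hex
  have hrange : ∀ m ∈ Finset.Icc 1 k, Real.pi * m / n ∈ Set.Icc 0 Real.pi := by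
    intro m hm
    rw [Finset.mem_Icc] at hm
    have hmn : (m : ℝ) ≤ n := by exact_mod_cast (by omega : m ≤ n)
    refine ⟨by have := Real.pi_pos; positivity, ?_⟩
    rw [div_le_iff₀ hn]
    exact mul_le_mul_of_nonneg_left hmn Real.pi_pos.le
  apply le_ithLargest _ i hi _ ((Finset.Icc 1 k).image J)
  · rw [Finset.card_image_of_injOn]
    · simpa using hik
    · intro a ha b hb hab
      have ha' := hJ a ha
      have hb' := hJ b hb
      rw [hab, hb'] at ha'
      have hcos : Real.cos (Real.pi * a / n) = Real.cos (Real.pi * b / n) := by linarith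
      have := Real.injOn_cos (hrange a ha) (hrange b hb) hcos
      have hp := Real.pi_pos.ne'
      field_simp at this
      exact_mod_cast this
  · intro x hx
    rw [Finset.mem_image] at hx
    obtain ⟨m, hm, rfl⟩ := hx
    rw [hJ m hm]
    have hm' := Finset.mem_Icc.1 hm
    have hmk : (m : ℝ) ≤ k := by exact_mod_cast hm'.2
    have h1 := hrange m hm
    have h2 := hrange k (Finset.mem_Icc.2 ⟨by omega, le_rfl⟩)
    have : Real.cos (Real.pi * k / n) ≤ Real.cos (Real.pi * m / n) := by
      apply Real.cos_le_cos_of_nonneg_of_le_pi h1.1 h2.2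
      have := Real.pi_pos
      gcongr
    linarith



/-- for every `k₀ ≥ 1` and `ε > 0` there is `n₀` such that for all `n ≥ n₀`
and all `1 ≤ k ≤ k₀`, the path graph `P_n` satisfies
`∑_{i=1}^{2k} d_i(P_n) − ∑_{i=1}^k λ_i(L(P_n)) < ε`. -/
theorem pathGraph_sum_degrees_sub_sum_lapEigs_lt (k₀ : ℕ) (hk₀ : 1 ≤ k₀) (ε : ℝ)
    (hε : 0 < ε) :
    ∃ n₀ : ℕ, ∀ n : ℕ, n₀ ≤ n → ∀ k : ℕ, 1 ≤ k → k ≤ k₀ →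
      (∑ i ∈ Finset.Icc 1 (2 * k), ithLargest (degTuple (SimpleGraph.pathGraph n)) i) -
        (∑ i ∈ Finset.Icc 1 k, ithLargest (lapEigs (SimpleGraph.pathGraph n)) i) < ε := by

  obtain ⟨N, hN⟩ := exists_nat_gt (10 * (k₀ : ℝ) ^ 3 / ε)
  refine ⟨N + k₀ + 1, fun n hn k hk hkk => ?_⟩
  have hn0 : (1 : ℝ) ≤ n := by exact_mod_cast (by omega : 1 ≤ n)
  have hNn : (N : ℝ) ≤ n := by exact_mod_cast (by omega : N ≤ n)
  have hkR : (k : ℝ) ≤ k₀ := by exact_mod_cast hkk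
  have hd : ∑ i ∈ Finset.Icc 1 (2 * k), ithLargest (degTuple (SimpleGraph.pathGraph n)) i
      ≤ ∑ i ∈ Finset.Icc 1 (2 * k), (2 : ℝ) := by
    refine Finset.sum_le_sum fun i _ => ithLargest_le_two _ _ fun v => ?_
    unfold degTuple
    rw [path_deg]
    split_ifs <;> norm_num
  have he : ∑ i ∈ Finset.Icc 1 k, (2 + 2 * Real.cos (Real.pi * k / n)) ≤
      ∑ i ∈ Finset.Icc 1 k, ithLargest (lapEigs (SimpleGraph.pathGraph n)) i := by
    refine Finset.sum_le_sum fun i hi => ?_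
    rw [Finset.mem_Icc] at hi
    exact path_top (by omega) i hi.1 hi.2
  simp only [Finset.sum_const, Nat.card_Icc, nsmul_eq_mul, Nat.add_sub_cancel] at hd he
  push_cast at hd
  have hc := Real.one_sub_sq_div_two_le_cos (x := Real.pi * k / n)
  have hsq : (Real.pi * k / n) ^ 2 ≤ 10 * k ^ 2 / n := by
    rw [div_pow, mul_pow]
    have hpi : Real.pi ^ 2 ≤ 10 := by nlinarith [Real.pi_lt_d2, Real.pi_pos]
    have : (n : ℝ) ≤ n ^ 2 := by nlinarith
    gcongr
  have hk0 : (0 : ℝ) ≤ k := by positivity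
  have hfin : (k : ℝ) * (10 * k ^ 2 / n) < ε := by
    have h1 : (k : ℝ) * (10 * k ^ 2 / n) = 10 * k ^ 3 / n := by ring
    have h2 : 10 * (k₀ : ℝ) ^ 3 / ε < n := lt_of_lt_of_le hN hNn
    rw [div_lt_iff₀ hε] at h2
    rw [h1, div_lt_iff₀ (by linarith)]
    have : (k : ℝ) ^ 3 ≤ (k₀ : ℝ) ^ 3 := by gcongr
    linarith
  have h5 := mul_le_mul_of_nonneg_left hsq hk0
  have h6 := mul_le_mul_of_nonneg_left hc hk0
  nlinarith
end

section
/- Let G = (V,E) be a finite simple bipartite graph with bipartition V = V_1 ∪ V_2 (every edge has one endpoint in V_1 and one in V_2), and let k be an integer with 1 ≤ k ≤ |V|. Then ∑_{i=1}^{k} λ_i(L(G)) ≤ ∑_{i=1}^{min{k, |V_1|}} d_i(G; V_1) + ∑_{i=1}^{min{k, |V_2|}} d_i(G; V_2), where d_i(G; V_j) denotes the i-th largest degree among the vertices belonging to V_j. -/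
open Finset

/-- The `i`-th largest value (1-indexed) among `f v` for `v` in the finite set `s`,
counted with multiplicity. -/
noncomputable def ithLargestOn {n : ℕ} (s : Finset (Fin n)) (f : Fin n → ℝ) (i : ℕ) : ℝ :=
  ithLargest (fun j : Fin s.card => f ((s.orderIsoOfFin rfl j) : Fin n)) i

theorem sum_top_aux {m : ℕ} (f : Fin m → ℝ) (r : ℕ) (hr : r ≤ m) :
    ∑ i ∈ Finset.Icc 1 r, ithLargest f i =
      ∑ j : Fin r, f (Tuple.sort f (Fin.rev (Fin.castLE hr j))) := by
  symm
  refine Finset.sum_bij (fun (j : Fin r) _ => (j : ℕ) + 1) ?_ ?_ ?_ ?_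
  · intro j _
    rw [Finset.mem_Icc]; omega
  · intro i _ j _ h
    exact Fin.ext (by simpa using h)
  · intro b hb
    rw [Finset.mem_Icc] at hb
    exact ⟨⟨b - 1, by omega⟩, Finset.mem_univ _, by simp; omega⟩
  · intro j _
    rw [ithLargest, dif_pos (by omega)]
    rfl

open Matrix in
theorem key_ineq {n : ℕ} (G : SimpleGraph (Fin n)) [DecidableRel G.Adj]
    (W : Finset (Fin n)) (hW : ∀ u ∈ W, ∀ v ∈ W, ¬ G.Adj u v) (x : Fin n → ℝ) (l : ℝ)
    (hl : 0 ≤ l) (hx : G.lapMatrix ℝ *ᵥ x = l • x) (hn : ∑ w, x w ^ 2 = 1) :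
    ∑ w ∈ W, l * x w ^ 2 / (G.degree w : ℝ) ≤ 1 := by
  set a : Fin n → ℝ := fun w => if w ∈ W then l * x w / (G.degree w : ℝ) else 0 with ha
  have hpos := (SimpleGraph.posSemidef_lapMatrix ℝ G).re_dotProduct_nonneg (x - a)
  have hsymm : x ⬝ᵥ (G.lapMatrix ℝ *ᵥ a) = a ⬝ᵥ (G.lapMatrix ℝ *ᵥ x) := by
    rw [dotProduct_mulVec, ← mulVec_transpose, (G.isSymm_lapMatrix (R := ℝ)).eq, dotProduct_comm]
  have h1 : x ⬝ᵥ (G.lapMatrix ℝ *ᵥ x) = l := by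
    rw [hx]
    simp only [dotProduct, Pi.smul_apply, smul_eq_mul]
    calc ∑ i, x i * (l * x i) = l * ∑ i, x i ^ 2 := by
          rw [Finset.mul_sum]; exact Finset.sum_congr rfl fun i _ => by ring
      _ = l := by rw [hn, mul_one]
  have h2 : a ⬝ᵥ (G.lapMatrix ℝ *ᵥ x) = l * ∑ w ∈ W, l * x w ^ 2 / (G.degree w : ℝ) := by
    rw [hx]
    simp only [dotProduct, Pi.smul_apply, smul_eq_mul, ha, ite_mul, zero_mul]
    rw [Finset.sum_ite_mem, Finset.univ_inter, Finset.mul_sum]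
    exact Finset.sum_congr rfl fun i _ => by ring
  have h3 : a ⬝ᵥ (G.lapMatrix ℝ *ᵥ a) = l * ∑ w ∈ W, l * x w ^ 2 / (G.degree w : ℝ) := by
    simp only [dotProduct]
    rw [Finset.mul_sum, ← Finset.sum_subset (Finset.subset_univ W)]
    · refine Finset.sum_congr rfl fun i hi => ?_
      rw [SimpleGraph.lapMatrix_mulVec_apply, Finset.sum_eq_zero, sub_zero]
      · simp only [ha, if_pos hi]
        by_cases hd : (G.degree i : ℝ) = 0
        · simp [hd]
        · field_simp
      · intro u hu
        have : u ∉ W := fun h => hW i hi u h (by simpa using hu)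
        simp [ha, this]
    · intro i _ hi
      simp [ha, hi]
  have h4 : (x - a) ⬝ᵥ (G.lapMatrix ℝ *ᵥ (x - a)) =
      l - l * ∑ w ∈ W, l * x w ^ 2 / (G.degree w : ℝ) := by
    rw [mulVec_sub, dotProduct_sub, sub_dotProduct, sub_dotProduct, hsymm, h1, h2, h3]; ring
  rw [star_trivial, h4] at hpos
  simp only [RCLike.re_to_real] at hpos
  rcases hl.eq_or_lt with h | h
  · simp [← h]
  · nlinarith

theorem exists_top_s17 {m : ℕ} (f : Fin m → ℝ) (r : ℕ) (hr : r ≤ m) :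
    ∃ S : Finset (Fin m), S.card = r ∧ ∑ i ∈ Finset.Icc 1 r, ithLargest f i = ∑ a ∈ S, f a ∧
      ∀ _ : 1 ≤ r, ∃ b, (∀ a ∈ S, f b ≤ f a) ∧ ∀ a ∉ S, f a ≤ f b := by
  have hm : Monotone (f ∘ Tuple.sort f) := Tuple.monotone_sort f
  let e : Fin r ↪ Fin m := (Fin.castLEEmb hr).trans
    (Fin.revPerm.trans (Tuple.sort f)).toEmbedding
  have he : ∀ j : Fin r, e j = Tuple.sort f (Fin.rev (Fin.castLE hr j)) := fun j => rfl
  refine ⟨Finset.univ.map e, by simp, ?_, ?_⟩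
  · rw [Finset.sum_map, sum_top_aux f r hr]
    exact Finset.sum_congr rfl fun j _ => by rw [he]
  · intro h1
    refine ⟨e ⟨r - 1, by omega⟩, ?_, ?_⟩
    · intro a ha
      obtain ⟨j, -, rfl⟩ := Finset.mem_map.1 ha
      rw [he, he]
      apply hm
      rw [Fin.rev_le_rev, Fin.le_def]
      simp; omega
    · intro a ha
      obtain ⟨j, rfl⟩ := (Fin.revPerm.trans (Tuple.sort f)).surjective a
      rw [he]
      apply hm
      simp only [Fin.revPerm_apply]
      rw [Fin.rev_le_rev, Fin.le_def]
      by_contra hlt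
      apply ha
      simp at hlt
      exact Finset.mem_map.2 ⟨⟨j, by omega⟩, Finset.mem_univ _, rfl⟩

theorem knapsack {m : ℕ} (f t : Fin m → ℝ) (k : ℕ) (hk : 1 ≤ k) (hf : ∀ i, 0 ≤ f i)
    (h0 : ∀ i, 0 ≤ t i) (h1 : ∀ i, t i ≤ 1) (hs : ∑ i, t i ≤ k) :
    ∑ i, f i * t i ≤ ∑ i ∈ Finset.Icc 1 (min k m), ithLargest f i := by
  obtain ⟨S, hc, hS, hb⟩ := exists_top_s17 f (min k m) (min_le_right _ _)
  rw [hS]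
  rcases Nat.eq_zero_or_pos m with rfl | hm
  · simp [Finset.eq_empty_of_isEmpty S]
  obtain ⟨b, hb1, hb2⟩ := hb (by omega)
  have hs' : ∑ i, t i ≤ (S.card : ℝ) := by
    rw [hc, Nat.cast_min]
    refine le_min hs ?_
    calc ∑ i, t i ≤ ∑ i : Fin m, (1 : ℝ) := Finset.sum_le_sum fun i _ => h1 i
      _ = m := by simp
  have hpt : ∀ i, f i * t i - (if i ∈ S then f i else 0) ≤
      f b * (t i - if i ∈ S then 1 else 0) := by
    intro i
    split_ifs with hi
    · nlinarith [hb1 i hi, h1 i]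
    · nlinarith [hb2 i hi, h0 i]
  have := Finset.sum_le_sum fun i (_ : i ∈ Finset.univ) => hpt i
  rw [← Finset.mul_sum, Finset.sum_sub_distrib, Finset.sum_sub_distrib] at this
  simp only [Finset.sum_ite_mem, Finset.univ_inter, Finset.sum_const, nsmul_eq_mul,
    mul_one] at this
  nlinarith [hf b]

theorem knapsackOn {n : ℕ} (W : Finset (Fin n)) (f c : Fin n → ℝ) (k : ℕ) (hk : 1 ≤ k)
    (h0 : ∀ i, 0 ≤ c i) (h1 : ∀ i, c i ≤ f i) (hs : ∑ i ∈ W, c i / f i ≤ k) :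
    ∑ i ∈ W, c i ≤ ∑ i ∈ Finset.Icc 1 (min k W.card), ithLargestOn W f i := by
  have hsum : ∀ g : Fin n → ℝ, ∑ i ∈ W, g i =
      ∑ j : Fin W.card, g ((W.orderIsoOfFin rfl j) : Fin n) := by
    intro g
    rw [← Finset.sum_coe_sort W]
    exact ((W.orderIsoOfFin rfl).toEquiv.sum_comp (fun i : W => g i)).symm
  have hf : ∀ i, 0 ≤ f i := fun i => (h0 i).trans (h1 i)
  have := knapsack (fun j : Fin W.card => f ((W.orderIsoOfFin rfl j) : Fin n))
    (fun j => c ((W.orderIsoOfFin rfl j) : Fin n) / f ((W.orderIsoOfFin rfl j) : Fin n)) k hk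
    (fun i => hf _) (fun i => div_nonneg (h0 _) (hf _))
    (fun i => div_le_one_of_le₀ (h1 _) (hf _))
    (by rw [← hsum (fun i => c i / f i)]; exact hs)
  refine le_trans (le_of_eq ?_) this
  rw [hsum]
  refine Finset.sum_congr rfl fun j _ => ?_
  rcases (hf ((W.orderIsoOfFin rfl j) : Fin n)).eq_or_lt with h | h
  · have a := h0 ((W.orderIsoOfFin rfl j) : Fin n)
    have b := h1 ((W.orderIsoOfFin rfl j) : Fin n)
    rw [← h] at b ⊢
    linarith
  ·
    field_simp

/-- let `G` be bipartite with parts `V₁, V₂`, and `1 ≤ k ≤ |V|`. Then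
`∑_{i=1}^k λ_i(L(G)) ≤ ∑_{i=1}^{min{k,|V₁|}} d_i(G;V₁) + ∑_{i=1}^{min{k,|V₂|}} d_i(G;V₂)`,
where `d_i(G;W)` is the `i`-th largest degree among the vertices of `W`. -/
theorem sum_lapEigs_le_of_bipartite {n : ℕ} (G : SimpleGraph (Fin n)) [DecidableRel G.Adj]
    (V₁ V₂ : Finset (Fin n)) (hdisj : Disjoint V₁ V₂) (hunion : V₁ ∪ V₂ = Finset.univ)
    (hbip : ∀ u v : Fin n, G.Adj u v → (u ∈ V₁ ∧ v ∈ V₂) ∨ (u ∈ V₂ ∧ v ∈ V₁))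
    (k : ℕ) (hk1 : 1 ≤ k) (hk2 : k ≤ n) :
    ∑ i ∈ Finset.Icc 1 k, ithLargest (lapEigs G) i ≤
      (∑ i ∈ Finset.Icc 1 (min k V₁.card), ithLargestOn V₁ (degTuple G) i) +
        ∑ i ∈ Finset.Icc 1 (min k V₂.card), ithLargestOn V₂ (degTuple G) i := by
  classical
  set hH := (SimpleGraph.posSemidef_lapMatrix ℝ G).isHermitian with hHdef
  obtain ⟨S, hSc, hS, -⟩ := exists_top_s17 (lapEigs G) k hk2
  rw [hS]
  let x : Fin n → Fin n → ℝ := fun i w => hH.eigenvectorBasis i w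
  have hl0 : ∀ i, 0 ≤ lapEigs G i := (SimpleGraph.posSemidef_lapMatrix ℝ G).eigenvalues_nonneg
  have hev : ∀ i, (G.lapMatrix ℝ).mulVec (x i) = lapEigs G i • x i :=
    fun i => hH.mulVec_eigenvectorBasis i
  have hnorm : ∀ i, ∑ w, x i w ^ 2 = 1 := by
    intro i
    have := hH.eigenvectorBasis.orthonormal.1 i
    have h2 := EuclideanSpace.norm_sq_eq (hH.eigenvectorBasis i)
    rw [this] at h2
    simp only [Real.norm_eq_abs, sq_abs] at h2
    rw [← h2]; norm_num
  have hdiag : ∀ w, ∑ i, lapEigs G i * x i w ^ 2 = degTuple G w := by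
    intro w
    have h := congrFun (congrFun hH.spectral_theorem w) w
    rw [Unitary.conjStarAlgAut_apply, Matrix.mul_apply] at h
    simp only [Matrix.mul_diagonal, Matrix.star_apply] at h
    have hL : G.lapMatrix ℝ w w = degTuple G w := by
      simp [SimpleGraph.lapMatrix, SimpleGraph.degMatrix, degTuple]
    rw [← hL, h]
    refine Finset.sum_congr rfl fun i _ => ?_
    simp [x, lapEigs]
    ring
  let c : Fin n → ℝ := fun w => ∑ i ∈ S, lapEigs G i * x i w ^ 2
  have hc0 : ∀ w, 0 ≤ c w := fun w =>
    Finset.sum_nonneg fun i _ => mul_nonneg (hl0 i) (sq_nonneg _)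
  have hc1 : ∀ w, c w ≤ degTuple G w := fun w => by
    rw [← hdiag w]
    exact Finset.sum_le_sum_of_subset_of_nonneg (Finset.subset_univ _)
      fun i _ _ => mul_nonneg (hl0 i) (sq_nonneg _)
  have hpart : ∀ W : Finset (Fin n), (∀ u ∈ W, ∀ v ∈ W, ¬ G.Adj u v) →
      ∑ w ∈ W, c w / degTuple G w ≤ k := by
    intro W hW
    simp only [c, Finset.sum_div]
    rw [Finset.sum_comm]
    calc _ ≤ ∑ i ∈ S, (1 : ℝ) := Finset.sum_le_sum fun i _ =>
          key_ineq G W hW (x i) _ (hl0 i) (hev i) (hnorm i)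
      _ = k := by simp [hSc]
  have htot : ∑ i ∈ S, lapEigs G i = ∑ w ∈ V₁, c w + ∑ w ∈ V₂, c w := by
    rw [← Finset.sum_union hdisj, hunion]
    simp only [c]
    rw [Finset.sum_comm]
    refine Finset.sum_congr rfl fun i _ => ?_
    rw [← Finset.mul_sum, hnorm, mul_one]
  rw [htot]
  refine add_le_add (knapsackOn V₁ _ c k hk1 hc0 hc1 (hpart V₁ ?_))
    (knapsackOn V₂ _ c k hk1 hc0 hc1 (hpart V₂ ?_))
  · intro u hu v hv h
    rcases hbip u v h with h | h
    · exact Finset.disjoint_left.1 hdisj hv h.2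
    · exact Finset.disjoint_left.1 hdisj hu h.1
  · intro u hu v hv h
    rcases hbip u v h with h | h
    · exact Finset.disjoint_left.1 hdisj h.1 hu
    · exact Finset.disjoint_left.1 hdisj h.2 hv
end

section
/- Let G = (V,E) be a finite simple graph with |V| = n, and let k be an integer with 1 ≤ k ≤ n/2. Then the sum of the k largest eigenvalues of the signless Laplacian matrix of G is at most the sum of the 2k largest vertex degrees of G: ∑_{i=1}^{k} λ_i(Q(G)) ≤ ∑_{i=1}^{2k} d_i(G). -/
open Finset

/-- The signless Laplacian matrix `Q(G) = D + A` of a finite simple graph. -/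
noncomputable def signlessLap {n : ℕ} (G : SimpleGraph (Fin n)) [DecidableRel G.Adj] :
    Matrix (Fin n) (Fin n) ℝ :=
  G.degMatrix ℝ + G.adjMatrix ℝ

theorem isHermitian_signlessLap {n : ℕ} (G : SimpleGraph (Fin n)) [DecidableRel G.Adj] :
    (signlessLap G).IsHermitian := by
  rw [Matrix.IsHermitian, Matrix.conjTranspose_eq_transpose_of_trivial]
  exact (SimpleGraph.isSymm_degMatrix ℝ G).add (SimpleGraph.isSymm_adjMatrix G)

/-- The eigenvalues of the signless Laplacian matrix of `G`
(as a tuple indexed by the vertices, with multiplicity). -/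
noncomputable def signlessLapEigs {n : ℕ} (G : SimpleGraph (Fin n)) [DecidableRel G.Adj] :
    Fin n → ℝ :=
  (isHermitian_signlessLap G).eigenvalues

theorem exists_topSet {n : ℕ} (f : Fin n → ℝ) (k : ℕ) (hk : k ≤ n) (hk1 : 1 ≤ k) :
    ∃ (T : Finset (Fin n)) (v0 : Fin n), T.card = k ∧
      ∑ i ∈ Finset.Icc 1 k, ithLargest f i = ∑ v ∈ T, f v ∧
      (∀ v ∈ T, f v0 ≤ f v) ∧ (∀ v, v ∉ T → f v ≤ f v0) := by
  have hmono := Tuple.monotone_sort f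
  set σ := Tuple.sort f with hσ
  let g : ℕ → Fin n := fun i => if h : 1 ≤ i ∧ i ≤ n then σ (Fin.rev ⟨i - 1, by omega⟩)
    else σ ⟨0, by omega⟩
  have hg : ∀ i, (h : 1 ≤ i ∧ i ≤ n) → g i = σ (Fin.rev ⟨i - 1, by omega⟩) := by
    intro i h
    simp only [g, dif_pos h]
  have hinj : Set.InjOn g (Finset.Icc 1 k : Finset ℕ) := by
    intro i hi j hj hij
    simp only [Finset.coe_Icc, Set.mem_Icc] at hi hj
    rw [hg i ⟨hi.1, by omega⟩, hg j ⟨hj.1, by omega⟩] at hij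
    have := congrArg Fin.val (Fin.rev_injective (σ.injective hij))
    simp at this
    omega
  refine ⟨(Finset.Icc 1 k).image g, g k, ?_, ?_, ?_, ?_⟩
  · rw [Finset.card_image_of_injOn hinj]; simp
  · rw [Finset.sum_image hinj]
    apply Finset.sum_congr rfl
    intro i hi
    rw [Finset.mem_Icc] at hi
    have h : 1 ≤ i ∧ i ≤ n := ⟨hi.1, by omega⟩
    rw [hg i h, ithLargest, dif_pos h]
  · intro v hv
    rw [Finset.mem_image] at hv
    obtain ⟨i, hi, rfl⟩ := hv
    rw [Finset.mem_Icc] at hi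
    rw [hg i ⟨hi.1, by omega⟩, hg k ⟨hk1, hk⟩]
    apply hmono
    rw [Fin.le_def]
    simp only [Fin.val_rev]
    omega
  · intro v hv
    have hlt : (σ.symm v).val < n - k := by
      by_contra hcon
      apply hv
      rw [Finset.mem_image]
      have := (σ.symm v).isLt
      refine ⟨n - (σ.symm v).val, ?_, ?_⟩
      · rw [Finset.mem_Icc]; omega
      · rw [hg _ ⟨by omega, by omega⟩, ← Equiv.eq_symm_apply]
        ext
        simp only [Fin.val_rev]
        omega
    rw [hg k ⟨hk1, hk⟩]
    have := @hmono (σ.symm v) (Fin.rev ⟨k - 1, by omega⟩) (by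
      rw [Fin.le_def]
      simp only [Fin.val_rev]
      omega)
    simpa using this

theorem weighted_le_top {n : ℕ} (f w : Fin n → ℝ) (k : ℕ) (hk : k ≤ n) (hk1 : 1 ≤ k)
    (hf : ∀ v, 0 ≤ f v) (hw0 : ∀ v, 0 ≤ w v) (hw1 : ∀ v, w v ≤ 1) (hs : ∑ v, w v ≤ k) :
    ∑ v, f v * w v ≤ ∑ i ∈ Finset.Icc 1 k, ithLargest f i := by
  obtain ⟨T, v0, hc, hsum, h1, h2⟩ := exists_topSet f k hk hk1
  rw [hsum]
  have key : ∀ v, (f v - f v0) * w v ≤ if v ∈ T then f v - f v0 else 0 := by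
    intro v
    split_ifs with hv
    · nlinarith [h1 v hv, hw1 v]
    · nlinarith [h2 v hv, hw0 v]
  have := Finset.sum_le_sum (fun v (_ : v ∈ Finset.univ) => key v)
  rw [Finset.sum_ite_mem, Finset.univ_inter, Finset.sum_sub_distrib, Finset.sum_const, hc] at this
  simp only [sub_mul, Finset.sum_sub_distrib, ← Finset.mul_sum, nsmul_eq_mul] at this
  nlinarith [hf v0]

/-- The star inequality. -/
theorem star_ineq_s18 {V E : Type*} [Fintype V] [DecidableEq V] [NormedAddCommGroup E]
    [InnerProductSpace ℝ E]
    (p : V → E) (hp : ∀ c : V → ℝ, ‖∑ v, c v • p v‖ ^ 2 ≤ ∑ v, c v ^ 2)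
    (h : V) (hh : 1 ≤ 2 * ‖p h‖ ^ 2) (L : Finset V) (hL : h ∉ L) :
    ∑ u ∈ L, (‖p h + p u‖ ^ 2 - 1 - 2 * ‖p u‖ ^ 2) ≤ 2 * ‖p h‖ ^ 2 - 1 := by
  rcases L.eq_empty_or_nonempty with rfl | hne
  · simp; linarith
  have hm : (1 : ℝ) ≤ (L.card : ℝ) := by exact_mod_cast hne.card_pos
  set m : ℝ := (L.card : ℝ) with hmdef
  set s : E := ∑ u ∈ L, p u with hs
  have e1 : ∑ u ∈ L, (‖p h + p u‖ ^ 2 - 1 - 2 * ‖p u‖ ^ 2)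
      = m * ‖p h‖ ^ 2 + 2 * inner ℝ (p h) s - m - ∑ u ∈ L, ‖p u‖ ^ 2 := by
    have : ∀ u ∈ L, (‖p h + p u‖ ^ 2 - 1 - 2 * ‖p u‖ ^ 2)
      = (‖p h‖ ^ 2 - 1) + 2 * inner ℝ (p h) (p u) - ‖p u‖ ^ 2 := by
      intro u _
      rw [norm_add_sq_real]; ring
    rw [Finset.sum_congr rfl this, Finset.sum_sub_distrib, Finset.sum_add_distrib,
      Finset.sum_const, ← Finset.mul_sum, hs, inner_sum, nsmul_eq_mul]
    ring
  have e2 : ‖s‖ ^ 2 ≤ m * ∑ u ∈ L, ‖p u‖ ^ 2 := by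
    have h1 : ‖s‖ ≤ ∑ u ∈ L, ‖p u‖ := norm_sum_le _ _
    have h2 := sq_sum_le_card_mul_sum_sq (s := L) (f := fun u => ‖p u‖)
    have := pow_le_pow_left₀ (norm_nonneg s) h1 2
    linarith
  have e3 : 0 ≤ ‖p h‖ ^ 2 - 2 * inner ℝ (p h) s + ‖s‖ ^ 2 := by
    rw [← norm_sub_sq_real]; positivity
  have e4 : m ^ 2 * ‖p h‖ ^ 2 + 2 * m * inner ℝ (p h) s + ‖s‖ ^ 2 ≤ m ^ 2 + m := by
    have := hp (fun v => if v = h then m else if v ∈ L then 1 else 0)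
    have a1 : ∑ v, (if v = h then m else if v ∈ L then (1 : ℝ) else 0) • p v = m • p h + s := by
      have : ∀ v, (if v = h then m else if v ∈ L then (1 : ℝ) else 0) • p v
        = (if v = h then m • p v else 0) + (if v ∈ L then p v else 0) := by
        intro v
        by_cases hv : v = h
        · subst hv; simp [hL]
        · simp [hv]
      rw [Finset.sum_congr rfl (fun v _ => this v), Finset.sum_add_distrib]
      simp [hs]
    have a2 : ∑ v, (if v = h then m else if v ∈ L then (1 : ℝ) else 0) ^ 2 = m ^ 2 + m := by
      have : ∀ v, (if v = h then m else if v ∈ L then (1 : ℝ) else 0) ^ 2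
        = (if v = h then m ^ 2 else 0) + (if v ∈ L then 1 else 0) := by
        intro v
        by_cases hv : v = h
        · subst hv; simp [hL]
        · simp [hv]
      rw [Finset.sum_congr rfl (fun v _ => this v), Finset.sum_add_distrib]
      simp [hmdef]
    rw [a1, a2, norm_add_sq_real, norm_smul, inner_smul_left] at this
    simp only [Real.norm_eq_abs, mul_pow, sq_abs, conj_trivial] at this
    linarith
  rw [e1]
  set a := ‖p h‖ ^ 2
  set B := ∑ u ∈ L, ‖p u‖ ^ 2
  set C : ℝ := inner ℝ (p h) s
  set S := ‖s‖ ^ 2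
  -- (a + B - t) + z + (m - 1) (1 - t) ≥ 0, scaled by m (m + 1)
  have t1 : 0 ≤ (m ^ 2 + m) * (a + B) - (m ^ 2 * a + 2 * m * C + S) := by
    nlinarith [mul_nonneg (by linarith : 0 ≤ m) e3,
      mul_nonneg (by linarith : 0 ≤ m) (sub_nonneg.2 e2)]
  have t2 : 0 ≤ m * (a - 2 * C + S) := mul_nonneg (by linarith) e3
  have t3 : 0 ≤ (m - 1) * (m ^ 2 + m - (m ^ 2 * a + 2 * m * C + S)) :=
    mul_nonneg (by linarith) (by linarith)
  have t4 : 0 ≤ (m ^ 2 + m) * (B + m - 1 - 2 * C + a * (2 - m)) := by nlinarith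
  have := nonneg_of_mul_nonneg_right t4 (by positivity)
  linarith

/-- Existence of a good fractional weighting. -/
theorem exists_weights {V E : Type*} [Fintype V] [DecidableEq V] [NormedAddCommGroup E]
    [InnerProductSpace ℝ E]
    (p : V → E) (hp : ∀ c : V → ℝ, ‖∑ v, c v • p v‖ ^ 2 ≤ ∑ v, c v ^ 2) :
    ∃ w : V → ℝ, (∀ v, 0 ≤ w v) ∧ (∀ v, w v ≤ 1) ∧ (∑ v, w v ≤ ∑ v, 2 * ‖p v‖ ^ 2) ∧
      ∀ u v, u ≠ v → ‖p u + p v‖ ^ 2 ≤ w u + w v := by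
  have hpair : ∀ u v, u ≠ v → ‖p u + p v‖ ^ 2 ≤ 2 := by
    intro u v huv
    have := hp (fun x => if x = u then 1 else if x = v then 1 else 0)
    have a1 : ∑ x, (if x = u then (1 : ℝ) else if x = v then 1 else 0) • p x = p u + p v := by
      have : ∀ x, (if x = u then (1 : ℝ) else if x = v then 1 else 0) • p x
        = (if x = u then p x else 0) + (if x = v then p x else 0) := by
        intro x
        by_cases hx : x = u
        · subst hx; simp [huv]
        · simp [hx]
      rw [Finset.sum_congr rfl (fun v _ => this v), Finset.sum_add_distrib]
      simp
    have a2 : ∑ x, (if x = u then (1 : ℝ) else if x = v then 1 else 0) ^ 2 = 2 := by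
      have : ∀ x, (if x = u then (1 : ℝ) else if x = v then 1 else 0) ^ 2
        = (if x = u then 1 else 0) + (if x = v then 1 else 0) := by
        intro x
        by_cases hx : x = u
        · subst hx; simp [huv]
        · simp [hx]
      rw [Finset.sum_congr rfl (fun v _ => this v), Finset.sum_add_distrib]
      simp; norm_num
    rwa [a1, a2] at this
  have hpar : ∀ u v, ‖p u + p v‖ ^ 2 ≤ 2 * ‖p u‖ ^ 2 + 2 * ‖p v‖ ^ 2 := by
    intro u v
    have h1 := norm_add_sq_real (p u) (p v)
    have h2 := norm_sub_sq_real (p u) (p v)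
    nlinarith [sq_nonneg ‖p u - p v‖]
  classical
  let H : Finset V := Finset.univ.filter (fun v => 1 < 2 * ‖p v‖ ^ 2)
  have hH : ∀ v, v ∈ H ↔ 1 < 2 * ‖p v‖ ^ 2 := by intro v; simp [H]
  rcases H.eq_empty_or_nonempty with hE | hne
  · have hl : ∀ v, 2 * ‖p v‖ ^ 2 ≤ 1 := by
      intro v
      by_contra hc
      have := (hH v).2 (not_le.1 hc)
      simp [hE] at this
    exact ⟨fun v => 2 * ‖p v‖ ^ 2, fun v => by positivity, hl, le_rfl, fun u v _ => hpar u v⟩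
  have hmax : ∀ u, ∃ h ∈ H, ∀ h' ∈ H, ‖p h' + p u‖ ^ 2 ≤ ‖p h + p u‖ ^ 2 :=
    fun u => Finset.exists_max_image H (fun h => ‖p h + p u‖ ^ 2) hne
  choose f hfH hf using hmax
  let w : V → ℝ := fun v => if v ∈ H then 1 else max (2 * ‖p v‖ ^ 2) (‖p (f v) + p v‖ ^ 2 - 1)
  have wH : ∀ v, v ∈ H → w v = 1 := fun v hv => by simp [w, hv]
  have wL : ∀ v, v ∉ H → w v = max (2 * ‖p v‖ ^ 2) (‖p (f v) + p v‖ ^ 2 - 1) :=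
    fun v hv => by simp [w, hv]
  have hHL : ∀ h u, h ∈ H → u ∉ H → ‖p h + p u‖ ^ 2 ≤ 1 + w u := by
    intro h u h1 h2
    rw [wL u h2]
    linarith [hf u h h1, le_max_right (2 * ‖p u‖ ^ 2) (‖p (f u) + p u‖ ^ 2 - 1)]
  refine ⟨w, ?_, ?_, ?_, ?_⟩
  · intro v
    by_cases hv : v ∈ H
    · rw [wH v hv]; norm_num
    · rw [wL v hv]; exact le_max_of_le_left (by positivity)
  · intro v
    by_cases hv : v ∈ H
    · rw [wH v hv]
    · rw [wL v hv]
      refine max_le ?_ ?_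
      · by_contra hc
        exact hv ((hH v).2 (not_le.1 hc))
      · have := hpair (f v) v (fun e => hv (e ▸ hfH v))
        linarith
  · let Lf : V → Finset V := fun h => Finset.univ.filter
      (fun u => f u = h ∧ (u ∉ H ∧ 2 * ‖p u‖ ^ 2 < ‖p (f u) + p u‖ ^ 2 - 1))
    have hstar : ∀ h ∈ H, ∑ u ∈ Lf h, (‖p h + p u‖ ^ 2 - 1 - 2 * ‖p u‖ ^ 2)
        ≤ 2 * ‖p h‖ ^ 2 - 1 := by
      intro h hh
      apply star_ineq_s18 p hp h ((hH h).1 hh).le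
      simp only [Lf, Finset.mem_filter, not_and]
      intro _ _ h2
      exact absurd hh h2
    have hsumm := Finset.sum_le_sum hstar
    let g : V → ℝ := fun u => if u ∉ H ∧ 2 * ‖p u‖ ^ 2 < ‖p (f u) + p u‖ ^ 2 - 1 then
      ‖p (f u) + p u‖ ^ 2 - 1 - 2 * ‖p u‖ ^ 2 else 0
    have hg : ∑ h ∈ H, ∑ u ∈ Lf h, (‖p h + p u‖ ^ 2 - 1 - 2 * ‖p u‖ ^ 2) = ∑ u, g u := by
      rw [← Finset.sum_fiberwise_of_maps_to (s := Finset.univ) (t := H) (g := f)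
        (fun u _ => hfH u) g]
      apply Finset.sum_congr rfl
      intro h _
      rw [Finset.sum_filter, Finset.sum_filter]
      apply Finset.sum_congr rfl
      intro u _
      by_cases h1 : f u = h
      · subst h1
        simp only [g, true_and, if_true]
      · simp [h1]
    rw [hg] at hsumm
    have hpt : ∀ v, w v - 2 * ‖p v‖ ^ 2 = g v - (if v ∈ H then 2 * ‖p v‖ ^ 2 - 1 else 0) := by
      intro v
      by_cases hv : v ∈ H
      · simp [w, g, hv]
      · rw [wL v hv]
        by_cases h2 : 2 * ‖p v‖ ^ 2 < ‖p (f v) + p v‖ ^ 2 - 1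
        · rw [max_eq_right h2.le]
          simp [g, hv, h2]
        · rw [max_eq_left (not_lt.1 h2)]
          simp [g, hv, h2]
    have := Finset.sum_congr rfl (fun v (_ : v ∈ Finset.univ) => hpt v)
    rw [Finset.sum_sub_distrib, Finset.sum_sub_distrib, Finset.sum_ite_mem,
      Finset.univ_inter] at this
    linarith
  · intro u v huv
    by_cases hu : u ∈ H <;> by_cases hv : v ∈ H
    · rw [wH u hu, wH v hv]; linarith [hpair u v huv]
    · rw [wH u hu]; exact hHL u v hu hv
    · rw [wH v hv, add_comm (p u), add_comm (w u)]; exact hHL v u hv hu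
    · rw [wL u hu, wL v hv]
      exact (hpar u v).trans (add_le_add (le_max_left _ _) (le_max_left _ _))

theorem quadForm_signlessLap {n : ℕ} (G : SimpleGraph (Fin n)) [DecidableRel G.Adj]
    (x : Fin n → ℝ) :
    2 * (x ⬝ᵥ (signlessLap G).mulVec x) =
      ∑ u, ∑ v, if G.Adj u v then (x u + x v) ^ 2 else 0 := by
  have hdeg : ∀ u, ∑ v, (if G.Adj u v then (1 : ℝ) else 0) = G.degree u := by
    intro u
    rw [Finset.sum_boole, ← SimpleGraph.card_neighborFinset_eq_degree,
      SimpleGraph.neighborFinset_eq_filter]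
  have e : ∀ u v, (if G.Adj u v then (x u + x v) ^ 2 else 0) =
      x u ^ 2 * (if G.Adj u v then (1 : ℝ) else 0) + x v ^ 2 * (if G.Adj v u then (1 : ℝ) else 0)
      + 2 * (x u * ((if G.Adj u v then (1 : ℝ) else 0) * x v)) := by
    intro u v
    have hcomm := G.adj_comm v u
    by_cases hadj : G.Adj u v <;> simp only [hcomm, hadj, if_true, if_false] <;> ring
  simp only [e, Finset.sum_add_distrib]
  rw [Finset.sum_comm (f := fun u v => x v ^ 2 * (if G.Adj v u then (1 : ℝ) else 0))]
  simp only [← Finset.mul_sum, hdeg]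
  simp only [signlessLap, Matrix.add_mulVec, dotProduct_add, mul_add]
  have a1 : x ⬝ᵥ (G.degMatrix ℝ).mulVec x = ∑ u, x u ^ 2 * G.degree u := by
    simp only [dotProduct, SimpleGraph.degMatrix, Matrix.mulVec_diagonal]
    exact Finset.sum_congr rfl (fun u _ => by ring)
  have a2 : x ⬝ᵥ (G.adjMatrix ℝ).mulVec x =
      ∑ u, x u * ∑ v, (if G.Adj u v then (1 : ℝ) else 0) * x v := by
    simp only [dotProduct, Matrix.mulVec, SimpleGraph.adjMatrix_apply]
  rw [a1, a2]
  ring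

/-- for a graph `G` on `n` vertices and `1 ≤ k ≤ n/2`, the sum of the `k`
largest signless Laplacian eigenvalues of `G` is at most the sum of the `2k` largest vertex
degrees of `G`. -/
theorem sum_signlessLapEigs_le_sum_degrees {n : ℕ} (G : SimpleGraph (Fin n))
    [DecidableRel G.Adj] (k : ℕ) (hk1 : 1 ≤ k) (hk2 : k ≤ n / 2) :
    ∑ i ∈ Finset.Icc 1 k, ithLargest (signlessLapEigs G) i ≤
      ∑ i ∈ Finset.Icc 1 (2 * k), ithLargest (degTuple G) i := by
  have hk : 2 * k ≤ n := by omega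
  obtain ⟨T, -, hc, hsum, -, -⟩ := exists_topSet (signlessLapEigs G) k (by omega) hk1
  rw [hsum]
  set hQ := isHermitian_signlessLap G with hQdef
  let b := hQ.eigenvectorBasis
  let p : Fin n → EuclideanSpace ℝ T := fun v => WithLp.toLp 2 (fun i => b i.1 v)
  have hnorm : ∀ q : EuclideanSpace ℝ T, ‖q‖ ^ 2 = ∑ i, q i ^ 2 := by
    intro q
    rw [EuclideanSpace.norm_sq_eq]
    simp
  have hp : ∀ c : Fin n → ℝ, ‖∑ v, c v • p v‖ ^ 2 ≤ ∑ v, c v ^ 2 := by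
    intro c
    have hB := b.orthonormal.sum_inner_products_le (WithLp.toLp 2 c) (s := T)
    rw [EuclideanSpace.norm_sq_eq] at hB
    simp only [Real.norm_eq_abs, sq_abs] at hB
    refine le_trans (le_of_eq ?_) hB
    rw [hnorm, ← Finset.sum_coe_sort T]
    apply Finset.sum_congr rfl
    intro i _
    congr 1
    simp [p, PiLp.inner_apply]
  obtain ⟨w, hw0, hw1, hws, hwe⟩ := exists_weights p hp
  have htr : ∑ v, 2 * ‖p v‖ ^ 2 = ((2 * k : ℕ) : ℝ) := by
    rw [← Finset.mul_sum]
    simp only [hnorm]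
    rw [Finset.sum_comm]
    have : ∀ i : T, ∑ v, p v i ^ 2 = 1 := by
      intro i
      have h1 := b.orthonormal.1 i.1
      have h2 := EuclideanSpace.norm_sq_eq (b i.1)
      rw [h1] at h2
      simp only [Real.norm_eq_abs, sq_abs] at h2
      simp only [p]
      linarith
    simp [this, hc]
  rw [htr] at hws
  have hfin := weighted_le_top (degTuple G) w (2 * k) hk (by omega)
    (fun v => Nat.cast_nonneg _) hw0 hw1 hws
  refine le_trans ?_ hfin
  have heig : ∀ i, 2 * signlessLapEigs G i =
      ∑ u, ∑ v, if G.Adj u v then (b i u + b i v) ^ 2 else 0 := by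
    intro i
    rw [← quadForm_signlessLap G (fun u => b i u)]
    have h1 := hQ.mulVec_eigenvectorBasis i
    have h2 : (fun u => b i u) = (WithLp.ofLp (hQ.eigenvectorBasis i)) := rfl
    rw [h2, h1]
    have h3 := EuclideanSpace.norm_sq_eq (b i)
    rw [b.orthonormal.1 i] at h3
    simp only [Real.norm_eq_abs, sq_abs] at h3
    rw [dotProduct_smul]
    have h4 : (WithLp.ofLp (hQ.eigenvectorBasis i)) ⬝ᵥ (WithLp.ofLp (hQ.eigenvectorBasis i)) = 1 := by
      simp only [dotProduct]
      have : ∑ u, b i u ^ 2 = 1 := by linarith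
      rw [← this]
      exact Finset.sum_congr rfl (fun u _ => by rw [sq])
    rw [h4]
    simp [signlessLapEigs]
  have hdeg : ∀ u, ∑ v, (if G.Adj u v then (1 : ℝ) else 0) = G.degree u := by
    intro u
    rw [Finset.sum_boole, ← SimpleGraph.card_neighborFinset_eq_degree,
      SimpleGraph.neighborFinset_eq_filter]
  have h2 : 2 * ∑ i ∈ T, signlessLapEigs G i =
      ∑ u, ∑ v, if G.Adj u v then ‖p u + p v‖ ^ 2 else 0 := by
    rw [Finset.mul_sum, Finset.sum_congr rfl (fun i _ => heig i), Finset.sum_comm]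
    apply Finset.sum_congr rfl
    intro u _
    rw [Finset.sum_comm]
    apply Finset.sum_congr rfl
    intro v _
    split_ifs
    · rw [hnorm, ← Finset.sum_coe_sort T]
      simp [p]
    · simp
  have h3 : ∑ u, ∑ v, (if G.Adj u v then ‖p u + p v‖ ^ 2 else 0) ≤
      ∑ u, ∑ v, (w u * (if G.Adj u v then (1 : ℝ) else 0)
        + w v * (if G.Adj v u then (1 : ℝ) else 0)) := by
    refine Finset.sum_le_sum fun u _ => Finset.sum_le_sum fun v _ => ?_
    have hcomm := G.adj_comm v u
    by_cases hadj : G.Adj u v <;> simp only [hcomm, hadj, if_true, if_false]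
    · linarith [hwe u v hadj.ne]
    · simp
  simp only [Finset.sum_add_distrib] at h3
  rw [Finset.sum_comm (f := fun u v => w v * (if G.Adj v u then (1 : ℝ) else 0))] at h3
  simp only [← Finset.mul_sum, hdeg] at h3
  have h4 : ∑ v, degTuple G v * w v = ∑ u, w u * (G.degree u : ℝ) :=
    Finset.sum_congr rfl (fun u _ => by simp [degTuple, mul_comm])
  rw [h4]
  linarith
end
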